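/- arXiv:2010.06754 — 3 statements merged into one kernel-verified Lean document; each statement's English description precedes it below -/
import Mathlib

section
/- Let (D, Ω) be a solution of the rotating patch equation. Then (1/2 − Ω) · (∫_D |x|² dx − |D|²/(2π)) = (1/2) · ∫_D |x − 2∇(1_D * N)(x)|² dx. -/
/-!
Write `φ = 1_D * N`, `G = ∇φ` and `ψ = Ψ - c`, where `c` is the constant value of `Ψ` on `∂D`, so
`v := ∇ψ = G - Ω x`, and `ψ = 0` on `∂D`.

* `φ` is differentiable everywhere with gradient `G(x) = ∫_D (x - y) / (2π|x - y|²) dy`, a bounded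
  function (`hasGradientAt_patchConv`, `norm_patchGrad_le`). This is obtained by replacing `log|z|`
  by `½ log(|z|² + ε²)`: the regularized gradients converge to `G` uniformly, at rate `π² ε`.
* Since `ψ` vanishes on `∂D`, the cut-off `1_D ψ` satisfies the fundamental theorem of calculus
  along every ray with derivative `1_D ∂_r ψ`, because on a line it can fail to be differentiable
  only at simple zeros of `ψ` (`ray_identity`). Polar coordinates around `y` and around `0` turn
  this into `∫_D v(x) · ∇N(x - y) dx = -ψ(y)` for `y ∈ D` and `∫_D v · x = -2 ∫_D ψ`
  (`integral_inner_gker`, `integral_inner_self`). Integrating the first over `y ∈ D` gives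
  `∫_D v · G = -∫_D ψ`, so that `∫_D v · (x - 2G) = 0`.
* Symmetrizing the double integral gives `∫_D x · G = |D|² / (4π)` (`integral_inner_patchGrad`).

Expanding `∫_D (G - Ω x) · (x - 2G) = 0` and `∫_D |x - 2G|²` and eliminating `∫_D |G|²` yields the
identity.
-/

open MeasureTheory Set Real Bornology

noncomputable section

/-- The plane `ℝ²`. -/
abbrev R2 : Type := EuclideanSpace ℝ (Fin 2)

/-- The point of `ℝ²` with given coordinates. -/
def pt (a b : ℝ) : R2 := (EuclideanSpace.equiv (Fin 2) ℝ).symm ![a, b]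

/-- The 2D Newtonian potential kernel `N(x) = (1/(2π)) log |x|`. -/
def nker (x : R2) : ℝ := (1 / (2 * π)) * Real.log ‖x‖

/-- The convolution `1_D * N`. -/
def patchConv (D : Set R2) (x : R2) : ℝ := ∫ y in D, nker (x - y)

/-- The relative stream function `Ψ(x) = (1_D * N)(x) − (Ω/2)|x|²`. -/
def streamFun (D : Set R2) (Ω : ℝ) (x : R2) : ℝ := patchConv D x - Ω / 2 * ‖x‖ ^ 2

/-- `(D, Ω)` is a solution of the rotating patch equation: `D` is a bounded open
simply connected set whose boundary is a `C²` Jordan curve, and `Ψ` is constant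
on `∂D`. -/
def IsPatchSolution (D : Set R2) (Ω : ℝ) : Prop :=
  IsOpen D ∧ IsBounded D ∧ SimplyConnectedSpace D ∧
  (∃ γ : ℝ → R2,
      ContDiff ℝ 2 γ ∧ Function.Periodic γ (2 * π) ∧
      Set.InjOn γ (Set.Ico 0 (2 * π)) ∧ (∀ t, deriv γ t ≠ 0) ∧
      Set.range γ = frontier D) ∧
  (∃ c : ℝ, ∀ x ∈ frontier D, streamFun D Ω x = c)

/-- Rotation of the plane by angle `α` about the origin. -/
def rot (α : ℝ) (x : R2) : R2 :=
  pt (Real.cos α * x 0 - Real.sin α * x 1) (Real.sin α * x 0 + Real.cos α * x 1)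

/-- `D` is `m`-fold symmetric. -/
def MFoldSymmetric (m : ℕ) (D : Set R2) : Prop := rot (2 * π / m) '' D = D

/-- Polar coordinates point `r(cos θ, sin θ)`. -/
def polar (r θ : ℝ) : R2 := pt (r * Real.cos θ) (r * Real.sin θ)

/-- The star-shaped domain with polar graph boundary `1 + u`. -/
def polarDomain (u : ℝ → ℝ) : Set R2 :=
  {x | ∃ r θ : ℝ, 0 ≤ r ∧ r < 1 + u θ ∧ x = polar r θ}

/-- The polar graph `{(1+u(θ))(cos θ, sin θ)}`. -/
def polarGraph (u : ℝ → ℝ) : Set R2 := {x | ∃ θ : ℝ, x = polar (1 + u θ) θ}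

/-- `L^∞` norm of a (continuous periodic) function on the torus. -/
def supNorm (u : ℝ → ℝ) : ℝ := ⨆ θ : ℝ, |u θ|

/-- The Fraenkel asymmetry. -/
def fraenkel (D : Set R2) : ℝ :=
  sInf (Set.range fun x : R2 =>
    (volume (symmDiff D (Metric.ball x (Real.sqrt ((volume D).toReal / π))))).toReal
      / (volume D).toReal)

/-- Asymmetry with respect to the unit disk centered at the origin. -/
def asym0 (D : Set R2) : ℝ :=
  (volume (symmDiff D (Metric.ball (0 : R2) 1))).toReal / π

/-- The Laplacian in the plane. -/
def lap (p : R2 → ℝ) (x : R2) : ℝ :=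
  ∑ i : Fin 2,
    fderiv ℝ (fun y => fderiv ℝ p y (EuclideanSpace.single i 1)) x (EuclideanSpace.single i 1)

/-- The radial function `g(r) = ℋ¹(∂B_r ∩ D)/(2πr)`, as a function on the plane. -/
def sliceg (D : Set R2) (y : R2) : ℝ :=
  (μH[1] (Metric.sphere (0 : R2) ‖y‖ ∩ D)).toReal / (2 * π * ‖y‖)

/-- Convolution of `f` with the Newtonian potential over the plane. -/
def convN (f : R2 → ℝ) (x : R2) : ℝ := ∫ y, f y * nker (x - y)

/-! ### The Newtonian kernel, its gradient and their regularizations -/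

open Filter Topology
open scoped RealInnerProductSpace

/-- The gradient kernel `∇N(z) = z / (2π|z|²)`, with value `0` at the origin. -/
def gker (z : R2) : R2 := ((1 / (2 * π)) * (‖z‖ ^ 2)⁻¹) • z

/-- The smooth regularization `z / (2π(|z|² + ε²))` of `gker`. -/
def gkerReg (ε : ℝ) (z : R2) : R2 := ((1 / (2 * π)) * (‖z‖ ^ 2 + ε ^ 2)⁻¹) • z

/-- The smooth regularization `(1/(4π)) log(|z|² + ε²)` of `nker`; its gradient is `gkerReg ε`. -/
def nkerReg (ε : ℝ) (z : R2) : ℝ := (1 / (4 * π)) * Real.log (‖z‖ ^ 2 + ε ^ 2)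

/-- The radial profile `ε² / (r(r² + ε²))`. It bounds `|gkerReg ε - gker|`, and as a function of `|z|`
it has integral `π² ε` over the plane. -/
def bump (ε r : ℝ) : ℝ := r⁻¹ * (1 + (ε⁻¹ * r) ^ 2)⁻¹

lemma finrank_R2 : Module.finrank ℝ R2 = 2 := by simp

lemma volume_real_ball_R2 : (volume : Measure R2).real (Metric.ball 0 1) = π := by
  rw [Measure.real, EuclideanSpace.volume_ball_fin_two]
  simp [Real.pi_pos.le]

lemma integrable_bump {ε : ℝ} (hε : 0 < ε) : Integrable (fun z : R2 => bump ε ‖z‖) := by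
  rw [integrable_fun_norm_addHaar volume (f := bump ε), finrank_R2]
  refine ((integrable_inv_one_add_sq.comp_mul_left' (inv_ne_zero hε.ne')).integrableOn (s := Ioi 0)).congr_fun ?_ measurableSet_Ioi
  intro r hr
  have : r ≠ 0 := (ne_of_gt hr)
  simp [bump, this]

lemma integral_bump {ε : ℝ} (hε : 0 < ε) : ∫ z : R2, bump ε ‖z‖ = π ^ 2 * ε := by
  rw [integral_fun_norm_addHaar volume (f := bump ε), finrank_R2, volume_real_ball_R2]
  have : ∫ y in Ioi (0:ℝ), y ^ (2 - 1) • bump ε y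
      = ∫ y in Ioi (0:ℝ), (fun r => (1 + r ^ 2)⁻¹) (ε⁻¹ * y) := by
    refine setIntegral_congr_fun measurableSet_Ioi ?_
    intro r hr
    have : r ≠ 0 := (ne_of_gt hr)
    simp [bump, this]
  rw [this, integral_comp_mul_left_Ioi (fun r : ℝ => (1 + r ^ 2)⁻¹) 0 (inv_pos.2 hε)]
  simp only [mul_zero, integral_Ioi_inv_one_add_sq, arctan_zero]
  simp
  ring

lemma bump_nonneg (ε : ℝ) {r : ℝ} (hr : 0 ≤ r) : 0 ≤ bump ε r := by
  unfold bump; positivity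

lemma inv_le_bump_add_one {r : ℝ} (hr : 0 ≤ r) : r⁻¹ ≤ bump 1 r + 1 := by
  rcases hr.eq_or_lt with rfl | h
  · simp [bump]
  · have : r⁻¹ - bump 1 r = r / (1 + r ^ 2) := by
      unfold bump; field_simp; ring
    have h2 : r / (1 + r ^ 2) ≤ 1 := by
      rw [div_le_one (by positivity)]; nlinarith [sq_nonneg (r - 1)]
    linarith

lemma norm_gker_le (z : R2) : ‖gker z‖ ≤ ‖z‖⁻¹ := by
  rcases eq_or_ne z 0 with rfl | hz
  · simp [gker]
  have hz' : 0 < ‖z‖ := norm_pos_iff.2 hz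
  have hpi : 1 / (2 * π) ≤ 1 := by
    rw [div_le_one (by positivity)]; linarith [Real.pi_gt_three]
  rw [gker, norm_smul, Real.norm_of_nonneg (by positivity)]
  calc 1 / (2 * π) * (‖z‖ ^ 2)⁻¹ * ‖z‖ ≤ 1 * (‖z‖ ^ 2)⁻¹ * ‖z‖ := by gcongr
    _ = ‖z‖⁻¹ := by field_simp

lemma norm_gkerReg_sub_le {ε : ℝ} (hε : 0 < ε) (z : R2) :
    ‖gkerReg ε z - gker z‖ ≤ bump ε ‖z‖ := by
  rcases eq_or_ne z 0 with rfl | hz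
  · simp [gker, gkerReg, bump]
  have hz' : 0 < ‖z‖ := norm_pos_iff.2 hz
  have hpi : 1 / (2 * π) ≤ 1 := by
    rw [div_le_one (by positivity)]; linarith [Real.pi_gt_three]
  have e : gkerReg ε z - gker z = (-((1 / (2 * π)) * (bump ε ‖z‖ * ‖z‖⁻¹))) • z := by
    rw [gkerReg, gker, ← sub_smul]
    congr 1
    unfold bump
    have : ‖z‖ ^ 2 + ε ^ 2 ≠ 0 := by positivity
    field_simp
    ring
  have hb := bump_nonneg ε hz'.le
  rw [e, norm_smul, norm_neg, Real.norm_of_nonneg (by positivity)]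
  calc 1 / (2 * π) * (bump ε ‖z‖ * ‖z‖⁻¹) * ‖z‖ ≤ 1 * (bump ε ‖z‖ * ‖z‖⁻¹) * ‖z‖ := by gcongr
    _ = bump ε ‖z‖ := by field_simp

lemma measurable_gker : Measurable gker := by
  unfold gker; fun_prop

lemma measurable_nker : Measurable nker := by
  unfold nker; fun_prop

lemma abs_nker_le (z : R2) : |nker z| ≤ ‖z‖⁻¹ + ‖z‖ := by
  rcases eq_or_ne z 0 with rfl | hz
  · simp [nker]
  have hz' : 0 < ‖z‖ := norm_pos_iff.2 hz
  have hpi : 1 / (2 * π) ≤ 1 := by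
    rw [div_le_one (by positivity)]; linarith [Real.pi_gt_three]
  have h1 := Real.log_le_sub_one_of_pos hz'
  have h2 := Real.log_le_sub_one_of_pos (inv_pos.2 hz')
  rw [Real.log_inv] at h2
  have h3 : 0 < ‖z‖⁻¹ := by positivity
  have h4 : |Real.log ‖z‖| ≤ ‖z‖⁻¹ + ‖z‖ := by rw [abs_le]; constructor <;> linarith
  rw [nker, abs_mul, abs_of_nonneg (by positivity : (0:ℝ) ≤ 1 / (2 * π))]
  calc _ ≤ 1 * |Real.log ‖z‖| := by gcongr
    _ ≤ _ := by linarith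

lemma abs_nkerReg_sub_le {ε : ℝ} (hε : 0 < ε) {z : R2} (hz : z ≠ 0) :
    |nkerReg ε z - nker z| ≤ ε * ‖z‖⁻¹ := by
  have hz' : 0 < ‖z‖ := norm_pos_iff.2 hz
  have hpi : 1 / (2 * π) ≤ 1 := by
    rw [div_le_one (by positivity)]; linarith [Real.pi_gt_three]
  have e : nkerReg ε z - nker z = (1 / (2 * π)) * (Real.log (1 + (ε / ‖z‖) ^ 2) / 2) := by
    have : ‖z‖ ^ 2 + ε ^ 2 = ‖z‖ ^ 2 * (1 + (ε / ‖z‖) ^ 2) := by field_simp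
    rw [nkerReg, nker, this, Real.log_mul (by positivity) (by positivity), Real.log_pow]
    push_cast
    ring
  have ht : 0 < ε / ‖z‖ := by positivity
  have h0 : 0 ≤ Real.log (1 + (ε / ‖z‖) ^ 2) := Real.log_nonneg (by nlinarith)
  have h1 : Real.log (1 + (ε / ‖z‖) ^ 2) ≤ 2 * (ε / ‖z‖) := by
    calc _ ≤ Real.log ((1 + ε / ‖z‖) ^ 2) := Real.log_le_log (by positivity) (by nlinarith)
      _ = 2 * Real.log (1 + ε / ‖z‖) := by rw [Real.log_pow]; norm_num
      _ ≤ _ := by linarith [Real.log_le_sub_one_of_pos (by positivity : 0 < 1 + ε / ‖z‖)]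
  rw [e, abs_of_nonneg (by positivity)]
  calc _ ≤ 1 * (Real.log (1 + (ε / ‖z‖) ^ 2) / 2) := by gcongr
    _ ≤ _ := by rw [← div_eq_mul_inv]; linarith

lemma hasFDerivAt_nkerReg {ε : ℝ} (hε : 0 < ε) (z : R2) :
    HasFDerivAt (nkerReg ε) (innerSL ℝ (gkerReg ε z)) z := by
  have h : ‖z‖ ^ 2 + ε ^ 2 ≠ 0 := by positivity
  have := (((hasStrictFDerivAt_norm_sq z).hasFDerivAt.add_const (ε ^ 2)).log h).const_mul (1 / (4 * π))
  convert! this using 1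
  ext w
  simp [gkerReg]
  field_simp
  ring

lemma norm_gkerReg_le {ε : ℝ} (hε : 0 < ε) (z : R2) : ‖gkerReg ε z‖ ≤ ε⁻¹ := by
  have hpi : 1 / (2 * π) ≤ 1 := by
    rw [div_le_one (by positivity)]; linarith [Real.pi_gt_three]
  rw [gkerReg, norm_smul, Real.norm_of_nonneg (by positivity)]
  calc _ ≤ 1 * (‖z‖ ^ 2 + ε ^ 2)⁻¹ * ‖z‖ := by gcongr
    _ ≤ ε⁻¹ := by
      rw [one_mul, inv_mul_le_iff₀ (by positivity), ← div_eq_mul_inv, le_div_iff₀ hε]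
      nlinarith [sq_nonneg (‖z‖ - ε), norm_nonneg z]

/-! ### Cut-off functions on the line and polar coordinates -/

/-- Simple zeros are isolated, hence countable in number. -/
lemma countable_simple_zeros {g g' : ℝ → ℝ} (hg : ∀ t, HasDerivAt g (g' t) t) :
    {t | g t = 0 ∧ g' t ≠ 0}.Countable := by
  have : DiscreteTopology {t | g t = 0 ∧ g' t ≠ 0} := by
    rw [discreteTopology_subtype_iff]
    rintro t ⟨h0, h1⟩
    have := (hg t).eventually_ne h1 (c := 0)
    rw [inf_principal_eq_bot]
    filter_upwards [this] with s hs using fun h => hs h.1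
  exact Set.countable_coe_iff.1 (countable_of_Lindelof_of_discrete)

/-- Fundamental theorem of calculus for `k · (1_U g)` on `(0, ∞)`, where `g` vanishes on `∂U`. The
cut-off `1_U g` has derivative `1_U g'` everywhere except possibly at boundary points of `U` with
`g' ≠ 0`; these are simple zeros of `g`, so they form a countable set. -/
lemma integral_cutoff {g g' k k' : ℝ → ℝ} {U : Set ℝ} {R M : ℝ}
    (hg : ∀ t, HasDerivAt g (g' t) t) (hk : ∀ t, HasDerivAt k (k' t) t) (hk' : Continuous k')
    (hU : IsOpen U) (hUR : ∀ t ∈ U, t < R) (hR : 0 < R) (hM0 : 0 ≤ M)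
    (hM : ∀ t ∈ U, |g' t| ≤ M) (h0 : ∀ t ∈ frontier U, g t = 0) :
    IntegrableOn (fun t => k' t * U.indicator g t) (Ioi 0) ∧
    IntegrableOn (fun t => k t * U.indicator g' t) (Ioi 0) ∧
    ∫ t in Ioi 0, (k' t * U.indicator g t + k t * U.indicator g' t)
      = - (k 0 * U.indicator g 0) := by
  have gc : Continuous g := continuous_iff_continuousAt.2 fun t => (hg t).continuousAt
  have kc : Continuous k := continuous_iff_continuousAt.2 fun t => (hk t).continuousAt
  have fc : Continuous (U.indicator g) := gc.indicator h0
  have g'eq : g' = deriv g := funext fun t => (hg t).deriv.symm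
  have g'm : Measurable g' := g'eq ▸ measurable_deriv g
  have out : ∀ t, R ≤ t → t ∉ U := fun t ht h => absurd (hUR t h) (not_lt.2 ht)
  have hf : ∀ t, t ∉ {t | g t = 0 ∧ g' t ≠ 0} → HasDerivAt (U.indicator g) (U.indicator g' t) t := by
    intro t ht
    by_cases htU : t ∈ U
    · rw [indicator_of_mem htU]
      refine (hg t).congr_of_eventuallyEq ?_
      filter_upwards [hU.mem_nhds htU] with s hs using indicator_of_mem hs g
    rw [indicator_of_notMem htU]
    by_cases htc : t ∈ closure U
    · have hfr : t ∈ frontier U := by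
        rw [hU.frontier_eq]; exact ⟨htc, htU⟩
      have g0 := h0 t hfr
      have g'0 : g' t = 0 := by
        by_contra h; exact ht ⟨g0, h⟩
      have := hg t
      rw [g'0, hasDerivAt_iff_isLittleO] at this
      rw [hasDerivAt_iff_isLittleO]
      -- `|1_U g| ≤ |g| = o(s - t)` at a boundary point with `g = g' = 0`
      refine Asymptotics.IsBigO.trans_isLittleO (Asymptotics.IsBigO.of_bound 1 ?_) this
      refine Eventually.of_forall fun s => ?_
      simp only [indicator_of_notMem htU, g0, smul_zero, sub_zero, one_mul]
      exact norm_indicator_le_norm_self _ _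
    · refine (hasDerivAt_const t (0:ℝ)).congr_of_eventuallyEq ?_
      filter_upwards [isClosed_closure.isOpen_compl.mem_nhds htc] with s hs
      exact indicator_of_notMem (fun h => hs (subset_closure h)) g
  have i1 : IntegrableOn (fun t => k' t * U.indicator g t) (Ioc 0 R) :=
    ((hk'.mul fc).integrableOn_Icc).mono_set Ioc_subset_Icc_self
  have i2 : IntegrableOn (fun t => k t * U.indicator g' t) (Ioc 0 R) := by
    refine IntegrableOn.mono_set (Integrable.mul_bdd (c := M) (kc.integrableOn_Icc) ?_ ?_) Ioc_subset_Icc_self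
    · exact (g'm.indicator hU.measurableSet).aestronglyMeasurable
    · refine Eventually.of_forall fun t => ?_
      by_cases ht : t ∈ U
      · simpa [ht] using hM t ht
      · simpa [ht] using hM0
  have ext : ∀ F : ℝ → ℝ, (∀ t, R ≤ t → F t = 0) → IntegrableOn F (Ioc 0 R) → IntegrableOn F (Ioi 0) := by
    intro F hF hi
    exact hi.of_forall_sdiff_eq_zero measurableSet_Ioi (fun t ht => hF t (by
      have h1 := ht.1; have h2 := ht.2
      simp only [mem_Ioi, mem_Ioc, not_and, not_le] at h1 h2
      exact (h2 h1).le))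
  refine ⟨ext _ (fun t ht => by simp [out t ht]) i1, ext _ (fun t ht => by simp [out t ht]) i2, ?_⟩
  have e1 : ∫ t in Ioi 0, (k' t * U.indicator g t + k t * U.indicator g' t)
      = ∫ t in Ioc 0 R, (k' t * U.indicator g t + k t * U.indicator g' t) := by
    refine setIntegral_eq_of_subset_of_forall_sdiff_eq_zero measurableSet_Ioi Ioc_subset_Ioi_self ?_
    intro t ht
    have h1 := ht.1; have h2 := ht.2
    simp only [mem_Ioi, mem_Ioc, not_and, not_le] at h1 h2
    simp [out t (h2 h1).le]
  rw [e1, ← intervalIntegral.integral_of_le hR.le,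
    integral_eq_of_hasDerivAt_off_countable_of_le (fun t => k t * U.indicator g t) _ hR.le
      (countable_simple_zeros hg) (kc.mul fc).continuousOn
      (fun t ht => (hk t).mul (hf t ht.2))
      ((intervalIntegrable_iff_integrableOn_Ioc_of_le hR.le).2 (i1.add i2))]
  simp [out R le_rfl]

/-- Integration in polar coordinates in the plane. -/
lemma integral_polar {F : R2 → ℝ} (hF : Integrable F) :
    ∫ z, F z = ∫ ω : Metric.sphere (0 : R2) 1, (∫ r in Ioi (0:ℝ), r * F (r • (ω : R2)))
      ∂(volume : Measure R2).toSphere := by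
  have mp := (volume : Measure R2).measurePreserving_homeomorphUnitSphereProd
  have emb := (homeomorphUnitSphereProd R2).measurableEmbedding
  have mp' := mp.symm (homeomorphUnitSphereProd R2).toMeasurableEquiv
  have emb' := (homeomorphUnitSphereProd R2).symm.measurableEmbedding
  have a : ∫ z, F z = ∫ x : ({(0)}ᶜ : Set R2), F x.1 ∂(Measure.comap Subtype.val volume) := by
    rw [integral_subtype_comap (measurableSet_singleton _).compl fun x ↦ F x,
        restrict_compl_singleton]
  have hi : Integrable (fun x : ({(0)}ᶜ : Set R2) => F x.1) (Measure.comap Subtype.val volume) := by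
    have : IntegrableOn F ({(0)}ᶜ : Set R2) := hF.integrableOn
    rwa [integrableOn_iff_comap_subtypeVal (measurableSet_singleton _).compl] at this
  have hi' := (mp'.integrable_comp_emb emb').2 hi
  simp only [Function.comp_def] at hi'
  rw [a, ← mp'.integral_comp emb', integral_prod _ hi']
  congr 1
  ext ω
  rw [finrank_R2]
  simp only [Measure.volumeIoiPow, ENNReal.ofReal]
  rw [integral_withDensity_eq_integral_smul (by fun_prop)]
  simp only [Homeomorph.toMeasurableEquiv_symm_coe, homeomorphUnitSphereProd_symm_apply_coe]
  rw [integral_subtype_comap measurableSet_Ioi fun a ↦ Real.toNNReal (a ^ (2 - 1)) • F (a • (ω : R2))]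
  refine setIntegral_congr_fun measurableSet_Ioi fun x hx ↦ ?_
  rw [NNReal.smul_def, Real.coe_toNNReal _ (pow_nonneg hx.out.le _)]
  simp

lemma toSphere_univ_R2 : (volume : Measure R2).toSphere.real univ = 2 * π := by
  rw [Measure.toSphere_real_apply_univ, finrank_R2, volume_real_ball_R2]; norm_num

/-! ### Differentiability of the potential -/

/-- The gradient `∇(1_D * N)` as a singular integral. -/
def patchGrad (D : Set R2) (x : R2) : R2 := ∫ y in D, gker (x - y)

lemma integrable_bump_sub {ε : ℝ} (hε : 0 < ε) (x : R2) :
    Integrable (fun y : R2 => bump ε ‖x - y‖) :=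
  (integrable_bump hε).comp_sub_left x

lemma setIntegral_bump_le {ε : ℝ} (hε : 0 < ε) (D : Set R2) (x : R2) :
    ∫ y in D, bump ε ‖x - y‖ ≤ π ^ 2 * ε := by
  calc _ ≤ ∫ y, bump ε ‖x - y‖ :=
        setIntegral_le_integral (integrable_bump_sub hε x)
          (Eventually.of_forall fun y => bump_nonneg ε (norm_nonneg _))
    _ = π ^ 2 * ε := by
      rw [integral_sub_left_eq_self (fun z : R2 => bump ε ‖z‖) volume x, integral_bump hε]

lemma integrableOn_const_of_isBounded {D : Set R2} (hb : IsBounded D) (c : ℝ) :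
    IntegrableOn (fun _ : R2 => c) D :=
  integrableOn_const hb.measure_lt_top.ne

lemma integrableOn_inv {D : Set R2} (hb : IsBounded D) (x : R2) :
    IntegrableOn (fun y => ‖x - y‖⁻¹) D := by
  refine Integrable.mono' ((integrable_bump_sub one_pos x).integrableOn.add (integrableOn_const_of_isBounded hb 1))
    (by fun_prop) (Eventually.of_forall fun y => ?_)
  rw [norm_inv, norm_norm]
  exact inv_le_bump_add_one (norm_nonneg _)

lemma setIntegral_inv_le {D : Set R2} (hb : IsBounded D) (x : R2) :
    ∫ y in D, ‖x - y‖⁻¹ ≤ π ^ 2 + volume.real D := by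
  calc _ ≤ ∫ y in D, (bump 1 ‖x - y‖ + 1) := by
        refine setIntegral_mono (integrableOn_inv hb x)
          ((integrable_bump_sub one_pos x).integrableOn.add (integrableOn_const_of_isBounded hb 1)) ?_
        exact fun _ => inv_le_bump_add_one (norm_nonneg _)
    _ = (∫ y in D, bump 1 ‖x - y‖) + volume.real D := by
        rw [integral_add (integrable_bump_sub one_pos x).integrableOn (integrableOn_const_of_isBounded hb 1)]
        simp
    _ ≤ _ := by linarith [setIntegral_bump_le one_pos D x]

lemma integrableOn_gker {D : Set R2} (hb : IsBounded D) (x : R2) :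
    IntegrableOn (fun y => gker (x - y)) D :=
  Integrable.mono' (integrableOn_inv hb x)
    (measurable_gker.comp (by fun_prop)).aestronglyMeasurable
    (Eventually.of_forall fun y => norm_gker_le _)

lemma norm_patchGrad_le {D : Set R2} (hb : IsBounded D) (x : R2) :
    ‖patchGrad D x‖ ≤ π ^ 2 + volume.real D :=
  (norm_integral_le_of_norm_le (integrableOn_inv hb x)
    (Eventually.of_forall fun _ => norm_gker_le _)).trans (setIntegral_inv_le hb x)

lemma continuous_gkerReg {ε : ℝ} (hε : 0 < ε) : Continuous (gkerReg ε) := by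
  unfold gkerReg
  have : ∀ z : R2, ‖z‖ ^ 2 + ε ^ 2 ≠ 0 := fun z => by positivity
  fun_prop (disch := exact this _)

lemma continuous_nkerReg {ε : ℝ} (hε : 0 < ε) : Continuous (nkerReg ε) :=
  continuous_iff_continuousAt.2 fun z => (hasFDerivAt_nkerReg hε z).continuousAt

lemma integrableOn_of_continuous {F : Type*} [NormedAddCommGroup F] {D : Set R2}
    (hb : IsBounded D) {f : R2 → F} (hf : Continuous f) : IntegrableOn f D :=
  (hf.continuousOn.integrableOn_compact hb.isCompact_closure).mono_set subset_closure

lemma integrableOn_nker {D : Set R2} (hb : IsBounded D) (x : R2) :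
    IntegrableOn (fun y => nker (x - y)) D :=
  Integrable.mono' ((integrableOn_inv hb x).add
      (integrableOn_of_continuous hb (f := fun y => ‖x - y‖) (by fun_prop)))
    (measurable_nker.comp (by fun_prop)).aestronglyMeasurable
    (Eventually.of_forall fun y => abs_nker_le _)

lemma ae_sub_ne_zero (D : Set R2) (x : R2) : ∀ᵐ y ∂(volume.restrict D), x - y ≠ 0 := by
  have : ∀ᵐ y : R2, y ≠ x := by simp [ae_iff]
  filter_upwards [ae_restrict_of_ae this] with y hy
  exact sub_ne_zero.2 hy.symm

lemma hasFDerivAt_regularized {D : Set R2} (hb : IsBounded D) {ε : ℝ} (hε : 0 < ε) (x : R2) :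
    HasFDerivAt (fun x => ∫ y in D, nkerReg ε (x - y))
      (innerSL ℝ (∫ y in D, gkerReg ε (x - y))) x := by
  have cg : Continuous fun y => gkerReg ε (x - y) := (continuous_gkerReg hε).comp (by fun_prop)
  have := hasFDerivAt_integral_of_dominated_of_fderiv_le (𝕜 := ℝ) (μ := volume.restrict D) (s := univ)
    (x₀ := x)
    (F := fun x y => nkerReg ε (x - y)) (F' := fun x y => innerSL ℝ (gkerReg ε (x - y)))
    (bound := fun _ => ε⁻¹) univ_mem
    (Eventually.of_forall fun x' => ((continuous_nkerReg hε).comp (by fun_prop)).aestronglyMeasurable)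
    (integrableOn_of_continuous hb ((continuous_nkerReg hε).comp (by fun_prop)))
    ((innerSL ℝ).continuous.comp cg).aestronglyMeasurable
    (Eventually.of_forall fun y x' _ => by
      rw [innerSL_apply_norm]; exact norm_gkerReg_le hε _)
    (integrableOn_const_of_isBounded hb _)
    (Eventually.of_forall fun y x' _ => by
      simpa [Function.comp_def] using (hasFDerivAt_nkerReg hε (x' - y)).comp x' ((hasFDerivAt_id x').sub_const y))
  rwa [(innerSL ℝ).integral_comp_comm (integrableOn_of_continuous hb cg)] at this

lemma hasGradientAt_patchConv {D : Set R2} (hb : IsBounded D) (x : R2) :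
    HasGradientAt (patchConv D) (patchGrad D x) x := by
  rw [hasGradientAt_iff_hasFDerivAt]
  have eps_pos : ∀ n : ℕ, (0:ℝ) < 1 / ((n:ℝ) + 1) := fun n => by positivity
  have eps_lim : Tendsto (fun n : ℕ => 1 / ((n:ℝ) + 1)) atTop (𝓝 0) :=
    tendsto_one_div_add_atTop_nhds_zero_nat
  have key := hasFDerivAt_of_tendstoUniformly (𝕜 := ℝ) (l := atTop)
    (f := fun (n : ℕ) x => ∫ y in D, nkerReg (1 / ((n:ℝ) + 1)) (x - y))
    (f' := fun (n : ℕ) x => innerSL ℝ (∫ y in D, gkerReg (1 / ((n:ℝ) + 1)) (x - y)))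
    (g := patchConv D) (g' := fun x => innerSL ℝ (patchGrad D x)) ?_
    (fun n x => hasFDerivAt_regularized hb (eps_pos n) x) ?_ x
  · exact key
  · rw [Metric.tendstoUniformly_iff]
    intro δ hδ
    have := (eps_lim.const_mul (π ^ 2))
    rw [mul_zero] at this
    filter_upwards [this.eventually (gt_mem_nhds hδ)] with n hn x
    refine lt_of_le_of_lt ?_ hn
    rw [dist_comm, dist_eq_norm, ← map_sub, innerSL_apply_norm, patchGrad,
      ← integral_sub (integrableOn_of_continuous hb
        (f := fun y => gkerReg (1 / ((n:ℝ) + 1)) (x - y)) ((continuous_gkerReg (eps_pos n)).comp (by fun_prop)))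
        (integrableOn_gker hb x)]
    exact (norm_integral_le_of_norm_le (integrable_bump_sub (eps_pos n) x).integrableOn
      (Eventually.of_forall fun y => norm_gkerReg_sub_le (eps_pos n) _)).trans
      (setIntegral_bump_le (eps_pos n) D x)
  · intro x
    rw [tendsto_iff_dist_tendsto_zero]
    have := (eps_lim.mul_const (∫ y in D, ‖x - y‖⁻¹))
    rw [zero_mul] at this
    refine squeeze_zero (fun _ => dist_nonneg) (fun n => ?_) this
    rw [dist_eq_norm, patchConv,
      ← integral_sub (integrableOn_of_continuous hb
        (f := fun y => nkerReg (1 / ((n:ℝ) + 1)) (x - y)) ((continuous_nkerReg (eps_pos n)).comp (by fun_prop)))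
        (integrableOn_nker hb x), ← integral_const_mul]
    refine norm_integral_le_of_norm_le ((integrableOn_inv hb x).const_mul _) ?_
    filter_upwards [ae_sub_ne_zero D x] with y hy using abs_nkerReg_sub_le (eps_pos n) hy

lemma measurable_patchGrad {D : Set R2} (hb : IsBounded D) : Measurable (patchGrad D) := by
  have : patchGrad D = fun x => (InnerProductSpace.toDual ℝ R2).symm (fderiv ℝ (patchConv D) x) :=
    funext fun x => (hasGradientAt_patchConv hb x).gradient.symm
  rw [this]
  exact (InnerProductSpace.toDual ℝ R2).symm.continuous.measurable.comp (measurable_fderiv ℝ _)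

/-! ### Integration by parts for functions vanishing on the boundary -/

section cutoff

variable {D : Set R2} {ψ : R2 → ℝ} {v : R2 → R2} {M : ℝ}

/-- The fundamental theorem of calculus for `k(t)` times `1_D ψ` along the ray `y + tω`. -/
lemma ray_identity (hD : IsOpen D) (hb : IsBounded D) (hψ : ∀ x, HasGradientAt ψ (v x) x)
    (hM0 : 0 ≤ M) (hM : ∀ x ∈ D, ‖v x‖ ≤ M) (h0 : ∀ x ∈ frontier D, ψ x = 0)
    {k k' : ℝ → ℝ} (hk : ∀ t, HasDerivAt k (k' t) t) (hk' : Continuous k')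
    (y ω : R2) (hω : ‖ω‖ = 1) :
    ∫ t in Ioi (0:ℝ), (k' t * D.indicator ψ (t • ω + y)
        + k t * D.indicator (fun x => ⟪v x, ω⟫) (t • ω + y)) = - (k 0 * D.indicator ψ y) := by
  obtain ⟨ρ, hρ⟩ := hb.subset_ball 0
  have hl : Continuous fun t : ℝ => t • ω + y := by fun_prop
  have hd : ∀ t : ℝ, HasDerivAt (fun t : ℝ => t • ω + y) ω t := fun t => by
    simpa using ((hasDerivAt_id t).smul_const ω).add_const y
  have := (integral_cutoff (g := fun t => ψ (t • ω + y)) (g' := fun t => ⟪v (t • ω + y), ω⟫)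
    (U := (fun t : ℝ => t • ω + y) ⁻¹' D) (R := |ρ| + ‖y‖ + 1) (M := M)
    (fun t => by
      simpa [Function.comp_def] using (hψ (t • ω + y)).hasFDerivAt.comp_hasDerivAt t (hd t)) hk hk' (hD.preimage hl)
    (fun t ht => by
      have h1 : ‖t • ω + y‖ < ρ := by simpa using hρ ht
      have h2 : ‖t • ω‖ ≤ ‖t • ω + y‖ + ‖y‖ := by
        simpa using norm_sub_le (t • ω + y) y
      rw [norm_smul, hω, mul_one, Real.norm_eq_abs] at h2
      linarith [le_abs_self t, le_abs_self ρ])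
    (by positivity) hM0
    (fun t ht => (abs_real_inner_le_norm _ _).trans (by rw [hω, mul_one]; exact hM _ ht))
    (fun t ht => h0 _ (hl.frontier_preimage_subset D ht))).2.2
  rw [show D.indicator ψ y = D.indicator ψ ((0:ℝ) • ω + y) by simp]
  exact this

/-- Representation formula: the weak form of `Δ N = δ` tested against the cut-off `1_D ψ`. -/
lemma integral_inner_gker (hD : IsOpen D) (hb : IsBounded D) (hψ : ∀ x, HasGradientAt ψ (v x) x)
    (hv : Measurable v)
    (hM0 : 0 ≤ M) (hM : ∀ x ∈ D, ‖v x‖ ≤ M) (h0 : ∀ x ∈ frontier D, ψ x = 0) (y : R2) :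
    ∫ x in D, ⟪v x, gker (x - y)⟫ = - D.indicator ψ y := by
  have hi : IntegrableOn (fun x => ⟪v x, gker (x - y)⟫) D := by
    refine Integrable.mono' ((integrableOn_inv hb y).const_mul M)
      (hv.inner (measurable_gker.comp (by fun_prop))).aestronglyMeasurable ?_
    filter_upwards [ae_restrict_mem hD.measurableSet] with x hx
    rw [norm_sub_rev]
    exact (norm_inner_le_norm _ _).trans
      (mul_le_mul (hM x hx) (norm_gker_le _) (norm_nonneg _) hM0)
  rw [← integral_indicator hD.measurableSet, ← integral_add_right_eq_self _ y,
    integral_polar (((integrable_indicator_iff hD.measurableSet).2 hi).comp_add_right y)]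
  have : ∀ ω : Metric.sphere (0 : R2) 1,
      ∫ r in Ioi (0:ℝ), r * D.indicator (fun x => ⟪v x, gker (x - y)⟫) (r • (ω : R2) + y)
        = (1 / (2 * π)) * - D.indicator ψ y := by
    intro ω
    have hω : ‖(ω : R2)‖ = 1 := by simp
    have := ray_identity hD hb hψ hM0 hM h0 (k := fun _ => 1) (k' := fun _ => 0)
      (fun t => hasDerivAt_const t 1) continuous_const y ω hω
    rw [one_mul] at this
    rw [← this, ← integral_const_mul]
    refine setIntegral_congr_fun measurableSet_Ioi fun r hr => ?_
    have hr' : (0:ℝ) < r := hr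
    by_cases h : r • (ω : R2) + y ∈ D
    · simp only [indicator_of_mem h, gker, add_sub_cancel_right, norm_smul, hω, inner_smul_right,
        Real.norm_of_nonneg hr'.le]
      field_simp
      simp
    · simp [h]
  simp only [this]
  rw [integral_const, toSphere_univ_R2, smul_eq_mul]
  field_simp

/-- The divergence theorem for the field `ψ(x) x` on `D`. -/
lemma integral_inner_self (hD : IsOpen D) (hb : IsBounded D) (hψ : ∀ x, HasGradientAt ψ (v x) x)
    (hv : Measurable v)
    (hM0 : 0 ≤ M) (hM : ∀ x ∈ D, ‖v x‖ ≤ M) (h0 : ∀ x ∈ frontier D, ψ x = 0) :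
    ∫ x in D, ⟪v x, x⟫ = - 2 * ∫ x in D, ψ x := by
  have ψc : Continuous ψ := continuous_iff_continuousAt.2 fun x => (hψ x).continuousAt
  have hi : IntegrableOn (fun x => ⟪v x, x⟫) D := by
    refine Integrable.mono' (integrableOn_of_continuous hb (f := fun x => M * ‖x‖) (by fun_prop))
      (hv.inner measurable_id).aestronglyMeasurable ?_
    filter_upwards [ae_restrict_mem hD.measurableSet] with x hx
    exact (norm_inner_le_norm _ _).trans (by gcongr; exact hM x hx)
  have hi2 : IntegrableOn (fun x => 2 * ψ x) D := integrableOn_of_continuous hb (by fun_prop)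
  suffices h : ∫ x in D, (⟪v x, x⟫ + 2 * ψ x) = 0 by
    rw [integral_add hi hi2, integral_const_mul] at h
    linarith
  rw [← integral_indicator hD.measurableSet,
    integral_polar (F := D.indicator fun x => ⟪v x, x⟫ + 2 * ψ x)
      ((integrable_indicator_iff hD.measurableSet).2 (hi.add hi2))]
  have : ∀ ω : Metric.sphere (0 : R2) 1,
      ∫ r in Ioi (0:ℝ), r * D.indicator (fun x => ⟪v x, x⟫ + 2 * ψ x) (r • (ω : R2)) = 0 := by
    intro ω
    have hω : ‖(ω : R2)‖ = 1 := by simp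
    have := ray_identity hD hb hψ hM0 hM h0 (k := fun t => t ^ 2) (k' := fun t => 2 * t)
      (fun t => by simpa using hasDerivAt_pow 2 t) (by fun_prop) 0 ω hω
    simp only [add_zero] at this
    rw [show -((0:ℝ) ^ 2 * D.indicator ψ 0) = 0 by simp] at this
    refine Eq.trans ?_ this
    refine setIntegral_congr_fun measurableSet_Ioi fun (r : ℝ) _ => ?_
    by_cases h : r • (ω : R2) ∈ D
    · simp only [indicator_of_mem h, inner_smul_right]
      ring
    · simp [h]
  simp [this]

end cutoff

/-! ### Double integrals and the identity -/

lemma integrable_prod_inner_gker {D : Set R2} (hD : IsOpen D) (hb : IsBounded D)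
    {v : R2 → R2} {M : ℝ} (hv : Measurable v) (hM : ∀ x ∈ D, ‖v x‖ ≤ M) (hM0 : 0 ≤ M) :
    Integrable (fun p : R2 × R2 => ⟪v p.1, gker (p.1 - p.2)⟫)
      ((volume.restrict D).prod (volume.restrict D)) := by
  have : IsFiniteMeasure (volume.restrict D) := ⟨by simpa using hb.measure_lt_top⟩
  have hm : Measurable fun p : R2 × R2 => ⟪v p.1, gker (p.1 - p.2)⟫ :=
    (hv.comp measurable_fst).inner (measurable_gker.comp (by fun_prop))
  have hbd : ∀ x ∈ D, ∀ y, ‖⟪v x, gker (x - y)⟫‖ ≤ M * ‖x - y‖⁻¹ := fun x hx y =>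
    (norm_inner_le_norm _ _).trans (mul_le_mul (hM x hx) (norm_gker_le _) (norm_nonneg _) hM0)
  rw [integrable_prod_iff hm.aestronglyMeasurable]
  constructor
  · filter_upwards [ae_restrict_mem hD.measurableSet] with x hx
    exact Integrable.mono' ((integrableOn_inv hb x).const_mul M)
      (hm.comp measurable_prodMk_left).aestronglyMeasurable (Eventually.of_forall (hbd x hx))
  · refine Integrable.mono' (integrable_const (M * (π ^ 2 + volume.real D)))
      hm.norm.stronglyMeasurable.integral_prod_right.aestronglyMeasurable ?_
    filter_upwards [ae_restrict_mem hD.measurableSet] with x hx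
    rw [Real.norm_of_nonneg (integral_nonneg fun _ => norm_nonneg _)]
    calc _ ≤ ∫ y in D, M * ‖x - y‖⁻¹ :=
          integral_mono_of_nonneg (Eventually.of_forall fun _ => norm_nonneg _)
            ((integrableOn_inv hb x).const_mul M) (Eventually.of_forall (hbd x hx))
      _ ≤ _ := by
        rw [integral_const_mul]; gcongr; exact setIntegral_inv_le hb x

lemma inner_patchGrad {D : Set R2} (hb : IsBounded D) (w x : R2) :
    ⟪w, patchGrad D x⟫ = ∫ y in D, ⟪w, gker (x - y)⟫ :=
  (integral_inner (integrableOn_gker hb x) w).symm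

/-- Exchanging `x` and `y` in the double integral replaces `x · ∇N(x - y)` by its symmetrization
`½ (x - y) · ∇N(x - y) = 1 / (4π)`. -/
lemma integral_inner_patchGrad {D : Set R2} (hD : IsOpen D) (hb : IsBounded D) :
    ∫ x in D, ⟪x, patchGrad D x⟫ = volume.real D ^ 2 / (4 * π) := by
  have : IsFiniteMeasure (volume.restrict D) := ⟨by simpa using hb.measure_lt_top⟩
  obtain ⟨ρ, hρ⟩ := hb.subset_ball 0
  have hi := integrable_prod_inner_gker hD hb (v := id) (M := |ρ|) measurable_id
    (fun x hx => by
      have : ‖x‖ < ρ := by simpa using hρ hx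
      exact this.le.trans (le_abs_self ρ)) (abs_nonneg _)
  simp only [id] at hi
  have hi' := hi.swap
  simp only [Function.comp_def, Prod.swap] at hi'
  have odd : ∀ z, gker (-z) = - gker z := fun z => by simp [gker]
  have e1 : ∫ x in D, ⟪x, patchGrad D x⟫ = ∫ x in D, ∫ y in D, ⟪x, gker (x - y)⟫ := by
    simp only [inner_patchGrad hb]
  have e2 : ∫ x in D, ∫ y in D, ⟪x, gker (x - y)⟫ = ∫ x in D, ∫ y in D, ⟪y, gker (y - x)⟫ :=
    integral_integral_swap hi
  have e3 : (∫ x in D, ∫ y in D, ⟪x, gker (x - y)⟫) + (∫ x in D, ∫ y in D, ⟪y, gker (y - x)⟫)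
      = ∫ x in D, ∫ y in D, (1 / (2 * π)) := by
    rw [← integral_integral_add hi hi']
    refine integral_congr_ae (Eventually.of_forall fun x => integral_congr_ae ?_)
    filter_upwards [ae_sub_ne_zero D x] with y hy
    rw [← neg_sub x y, odd, inner_neg_right, ← sub_eq_add_neg, ← inner_sub_left, gker,
      inner_smul_right, real_inner_self_eq_norm_sq]
    have : ‖x - y‖ ≠ 0 := norm_ne_zero_iff.2 hy
    field_simp
  rw [← e2] at e3
  rw [e1]
  have e4 : ∫ x in D, ∫ y in D, (1 / (2 * π)) = volume.real D ^ 2 / (2 * π) := by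
    simp; ring
  rw [e4] at e3
  linear_combination e3 / 2

/-- The second variational identity for rotating patches. -/
theorem rotating_patch_identity_gradient (D : Set R2) (Ω : ℝ)
    (hsol : IsPatchSolution D Ω) :
    (1/2 - Ω) * ((∫ x in D, ‖x‖ ^ 2) - (volume D).toReal ^ 2 / (2 * π))
      = (1/2) * ∫ x in D, ‖x - (2 : ℝ) • gradient (patchConv D) x‖ ^ 2 := by
  obtain ⟨hD, hb, -, -, c, hc⟩ := hsol
  have hgrad : ∀ x, gradient (patchConv D) x = patchGrad D x :=
    fun x => (hasGradientAt_patchConv hb x).gradient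
  simp only [hgrad]
  change _ * (_ - volume.real D ^ 2 / _) = _
  set G := patchGrad D
  have Gm : Measurable G := measurable_patchGrad hb
  obtain ⟨ρ, hρ⟩ := hb.subset_ball 0
  have hρ' : ∀ x ∈ D, ‖x‖ ≤ |ρ| := fun x hx => by
    have : ‖x‖ < ρ := by simpa using hρ hx
    exact this.le.trans (le_abs_self ρ)
  have hG := norm_patchGrad_le hb
  set B := π ^ 2 + volume.real D
  have hB0 : 0 ≤ B := (norm_nonneg _).trans (hG 0)
  set ψ : R2 → ℝ := fun x => streamFun D Ω x - c
  set v : R2 → R2 := fun x => G x - Ω • x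
  have hψ : ∀ x, HasGradientAt ψ (v x) x := by
    intro x
    rw [hasGradientAt_iff_hasFDerivAt]
    have := (((hasGradientAt_patchConv hb x).hasFDerivAt).sub
      ((hasStrictFDerivAt_norm_sq x).hasFDerivAt.const_mul (Ω / 2))).sub_const c
    convert! this using 1
    ext w
    simp [v, G]
    ring
  have hv : Measurable v := Gm.sub (by fun_prop)
  have hM : ∀ x ∈ D, ‖v x‖ ≤ B + |Ω| * |ρ| := fun x hx => by
    refine (norm_sub_le _ _).trans ?_
    rw [norm_smul, Real.norm_eq_abs]
    gcongr
    · exact hG x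
    · exact hρ' x hx
  have hM0 : 0 ≤ B + |Ω| * |ρ| := by positivity
  have h0 : ∀ x ∈ frontier D, ψ x = 0 := fun x hx => by simp [ψ, hc x hx]
  have A1 := integral_inner_self hD hb hψ hv hM0 hM h0
  have A2 : ∫ x in D, ⟪v x, G x⟫ = - ∫ x in D, ψ x := by
    have s := integral_integral_swap (f := fun x y => ⟪v x, gker (x - y)⟫)
      (integrable_prod_inner_gker hD hb hv hM hM0)
    simp only [G, inner_patchGrad hb]
    rw [s]
    simp only [integral_inner_gker hD hb hψ hv hM0 hM h0]
    rw [integral_neg]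
    congr 1
    exact setIntegral_congr_fun hD.measurableSet fun x hx => indicator_of_mem hx ψ
  have A3 := integral_inner_patchGrad hD hb
  have ixx : IntegrableOn (fun x : R2 => ‖x‖ ^ 2) D := integrableOn_of_continuous hb (by fun_prop)
  have bdd : ∀ {f : R2 → ℝ} (C : ℝ), Measurable f → (∀ x ∈ D, |f x| ≤ C) → IntegrableOn f D := by
    intro f C hf h
    refine Integrable.mono' (integrableOn_const_of_isBounded hb C) hf.aestronglyMeasurable ?_
    filter_upwards [ae_restrict_mem hD.measurableSet] with x hx using h x hx
  have ixG : IntegrableOn (fun x => ⟪x, G x⟫) D :=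
    bdd (|ρ| * B) (measurable_id.inner Gm) fun x hx =>
      (abs_real_inner_le_norm _ _).trans
        (mul_le_mul (hρ' x hx) (hG x) (norm_nonneg _) (abs_nonneg _))
  have iGG : IntegrableOn (fun x => ‖G x‖ ^ 2) D :=
    bdd (B ^ 2) (Gm.norm.pow_const 2) fun x hx => by
      rw [abs_of_nonneg (by positivity)]
      gcongr
      exact hG x
  have E1 : ∫ x in D, ⟪v x, x⟫ = (∫ x in D, ⟪x, G x⟫) - Ω * ∫ x in D, ‖x‖ ^ 2 := by
    rw [← integral_const_mul, ← integral_sub ixG (ixx.const_mul Ω)]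
    congr 1; ext x
    simp [v, inner_sub_left, inner_smul_left, real_inner_comm]
  have E2 : ∫ x in D, ⟪v x, G x⟫ = (∫ x in D, ‖G x‖ ^ 2) - Ω * ∫ x in D, ⟪x, G x⟫ := by
    rw [← integral_const_mul, ← integral_sub iGG (ixG.const_mul Ω)]
    congr 1; ext x
    simp [v, inner_sub_left, inner_smul_left]
  have E3 : ∫ x in D, ‖x - (2:ℝ) • G x‖ ^ 2
      = (∫ x in D, ‖x‖ ^ 2) - 4 * (∫ x in D, ⟪x, G x⟫) + 4 * ∫ x in D, ‖G x‖ ^ 2 := by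
    have i4 : Integrable (fun x : R2 => ‖x‖ ^ 2 - 4 * ⟪x, G x⟫) (volume.restrict D) :=
      ixx.sub (ixG.const_mul 4)
    rw [← integral_const_mul, ← integral_const_mul, ← integral_sub ixx (ixG.const_mul 4),
      ← integral_add i4 (iGG.const_mul 4)]
    congr 1; ext x
    rw [norm_sub_sq_real, inner_smul_right, norm_smul]
    norm_num
    ring
  rw [E1] at A1
  rw [E2] at A2
  rw [E3]
  have A3' : volume.real D ^ 2 / (2 * π) = 2 * ∫ x in D, ⟪x, G x⟫ := by
    rw [A3]; field_simp; norm_num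
  rw [A3']
  linear_combination A1 - 2 * A2
end
end

section
/- There exist positive constants Ω₂, α₂ and c₂ such that the following holds: if (D, Ω) is a solution of the rotating patch equation with |D| = π, Ω < Ω₂ and 𝒜₀(D) < α₂, then there exists a C¹ function u : 𝕋 → (−1, ∞) such that ∂D = {(1 + u(θ))(cos θ, sin θ) : θ ∈ 𝕋} and ‖u‖_{L∞(𝕋)} ≤ c₂ · 𝒜₀(D) · |log 𝒜₀(D)|. -/
/-!
Write `a = asym0 D` and `E = D Δ B`, with `B` the unit disk. The constants are `Ω₂ = 1/64`,
`α₂ = 10⁻⁸` and `c₂ = 80`.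

*Estimates on the boundary.* Let `x, y` be boundary points with norms in `[1/2, 2]`. By the circle
means of the logarithm, the potential of `B` increases by at least `(|x| - |y|)/16` from `y` to `x`
when `|y| ≤ |x|` (`disk_slope`). Since the stream function of `D` takes the same value at both points
and `Ω ≤ 1/64`, this increment must be compensated by `E`, so that
`(π/16)(|x| - |y|) ≤ ∫_E |log |x - z| - log |y - z|| dz` (`radial_gap`). Two pointwise bounds on the
integrand, combined with `∫_E dz/|x - z| ≤ 3π√a` (`kernel_bound`), yield (`boundary_estimates`)
`||x| - |y|| ≤ 96 √a |x - y|` and `||x| - |y|| ≤ 80 a |log a|`.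

*Localization.* The boundary is connected, `E` is small and `|D| = π`; together with the second
estimate this forces `||x| - 1| ≤ 80 a |log a|` on the whole boundary, with the disk of radius
`1 - 80 a |log a|` inside `D` and `D` inside the closed disk of radius `1 + 80 a |log a|`
(`localization`).

*Graph property and regularity.* Every ray from the origin therefore meets the boundary, and only
once, because the first estimate is a contraction along the ray. The same estimate shows that the
velocity of the boundary curve is nowhere radial, and the inverse function theorem gives the
regularity of the polar radius (`graph_contDiff`).
-/

open MeasureTheory Set Real Bornology

noncomputable section

/-! ### Integrals of the kernel `1/|x - z|` -/

/-- The kernel `1/|x - z|` cut off at distance `δ` from `x`, integrated in polar coordinates around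
`x`. -/
lemma integrable_trunc (δ : ℝ) (hδ : 0 < δ) (x : R2) :
    Integrable (fun z : R2 => (Iio δ).indicator (fun r : ℝ => r⁻¹) ‖x - z‖) ∧
    ∫ z : R2, (Iio δ).indicator (fun r : ℝ => r⁻¹) ‖x - z‖ = 2 * π * δ := by
  have hcong : ∀ y ∈ Ioi (0 : ℝ), (y ^ (Module.finrank ℝ R2 - 1) •
      (Iio δ).indicator (fun r : ℝ => r⁻¹) y) = (Iio δ).indicator (fun _ => (1 : ℝ)) y := by
    intro y (hy : 0 < y)
    by_cases h : y < δ
    · simp [h, hy.ne']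
    · simp [h]
  constructor
  · have h := (integrable_fun_norm_addHaar (E := R2) volume
      (f := (Iio δ).indicator (fun r : ℝ => r⁻¹))).2 (by
        rw [integrableOn_congr_fun hcong measurableSet_Ioi]
        rw [integrableOn_indicator_iff measurableSet_Iio]
        refine integrableOn_const ?_
        rw [Iio_inter_Ioi]
        simp)
    exact h.comp_sub_left x
  · rw [integral_sub_left_eq_self (fun z : R2 => (Iio δ).indicator (fun r : ℝ => r⁻¹) ‖z‖) volume x,
      integral_fun_norm_addHaar, setIntegral_congr_fun measurableSet_Ioi hcong,
      setIntegral_indicator measurableSet_Iio, Ioi_inter_Iio]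
    simp [measureReal_def, hδ.le, Real.pi_pos.le]
    ring

/-- The kernel `1/|x - z|` over a set of finite measure: the part within `δ` of `x` contributes at most
`2πδ`, and elsewhere the kernel is at most `1/δ`. With `δ = √|E|` the bound is of order `√|E|`. -/
lemma kernel_bound {E : Set R2} (hfin : volume E ≠ ⊤)
    (x : R2) {δ : ℝ} (hδ : 0 < δ) :
    IntegrableOn (fun z : R2 => ‖x - z‖⁻¹) E ∧
    ∫ z in E, ‖x - z‖⁻¹ ≤ 2 * π * δ + volume.real E / δ := by
  obtain ⟨h1, h2⟩ := integrable_trunc δ hδ x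
  have hb : ∀ z : R2, ‖x - z‖⁻¹ ≤ (Iio δ).indicator (fun r : ℝ => r⁻¹) ‖x - z‖ + δ⁻¹ := by
    intro z
    by_cases h : ‖x - z‖ < δ
    · have := hδ.le
      simp [h]; positivity
    · simp only [mem_Iio, h, not_false_eq_true, indicator_of_notMem, zero_add]
      exact inv_anti₀ hδ (not_lt.1 h)
  have hi : IntegrableOn (fun z : R2 => (Iio δ).indicator (fun r : ℝ => r⁻¹) ‖x - z‖ + δ⁻¹) E :=
    h1.integrableOn.add (integrableOn_const hfin)
  have hI : IntegrableOn (fun z : R2 => ‖x - z‖⁻¹) E := by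
    refine hi.mono' (by fun_prop) (Filter.Eventually.of_forall fun z => ?_)
    rw [norm_of_nonneg (by positivity)]
    exact hb z
  refine ⟨hI, (integral_mono hI hi hb).trans ?_⟩
  rw [integral_add h1.integrableOn (integrableOn_const hfin)]
  gcongr
  · rw [← h2]
    refine setIntegral_le_integral h1 (Filter.Eventually.of_forall fun z => ?_)
    exact indicator_apply_nonneg fun _ => by positivity
  · simp [div_eq_mul_inv]

/-! ### Polar coordinates and circle means of the logarithm -/

/-- Iterated integration in polar coordinates. The integrability of the inner integral is needed to
compare the outer integral with that of a smaller range of radii. -/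
lemma polar_fubini {f : ℂ → ℝ} (hm : Measurable f) (hf : Integrable f) :
    IntegrableOn (fun r : ℝ => ∫ θ in Ioo (-π) π, r * f (circleMap 0 r θ)) (Ioi 0) ∧
    ∫ z, f z = ∫ r in Ioi (0 : ℝ), ∫ θ in Ioo (-π) π, r * f (circleMap 0 r θ) := by
  have hsymm : ∀ p : ℝ × ℝ, Complex.polarCoord.symm p = circleMap 0 p.1 p.2 := by
    intro p; simp [circleMap, Complex.exp_mul_I]
  have hint : IntegrableOn (fun p : ℝ × ℝ => p.1 * f (circleMap 0 p.1 p.2))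
      (Ioi (0 : ℝ) ×ˢ Ioo (-π) π) (volume.prod volume) := by
    refine ⟨?_, ?_⟩
    · refine Measurable.aestronglyMeasurable ?_
      refine measurable_fst.mul (hm.comp ?_)
      unfold circleMap; fun_prop
    · have h := Complex.lintegral_comp_polarCoord_symm (fun z => ‖f z‖ₑ)
      have h2 := hf.2
      unfold HasFiniteIntegral at h2 ⊢
      rw [← h] at h2
      refine lt_of_le_of_lt (le_of_eq ?_) h2
      refine setLIntegral_congr_fun (measurableSet_Ioi.prod measurableSet_Ioo) ?_
      intro p hp
      simp only [hsymm, smul_eq_mul, enorm_mul]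
      rw [Real.enorm_eq_ofReal (le_of_lt hp.1)]
  constructor
  · unfold IntegrableOn at hint
    rw [← Measure.prod_restrict] at hint
    exact hint.integral_prod_left
  · rw [← Complex.integral_comp_polarCoord_symm f]
    simp only [hsymm, smul_eq_mul]
    exact setIntegral_prod _ hint

/-- The mean over the circle `|z| = r` of `log |z - a|` is `log (max r |a|)`, by the mean value property
(the Jensen formula for a linear polynomial). -/
lemma circle_log (a : ℂ) {r : ℝ} (hr : 0 < r) :
    IntegrableOn (fun θ => Real.log ‖circleMap 0 r θ - a‖) (Ioo (-π) π) ∧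
    ∫ θ in Ioo (-π) π, Real.log ‖circleMap 0 r θ - a‖ = 2 * π * Real.log (max r ‖a‖) := by
  have hper : Function.Periodic (fun θ => Real.log ‖circleMap 0 r θ - a‖) (2 * π) :=
    fun x => by simp [periodic_circleMap 0 r x]
  have hci : IntervalIntegrable (fun θ => Real.log ‖circleMap 0 r θ - a‖) volume 0 (2 * π) :=
    circleIntegrable_log_norm_sub_const (c := 0) (a := a) r
  have hpi := Real.pi_pos
  constructor
  · have : IntervalIntegrable (fun θ => Real.log ‖circleMap 0 r θ - a‖) volume (-π) π :=
      hper.intervalIntegrable (t := 0) (by positivity) (by simpa using hci) _ _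
    rw [intervalIntegrable_iff_integrableOn_Ioo_of_le (by linarith)] at this
    exact this
  · have h := circleAverage_log_norm_sub_const_eq_log_radius_add_posLog (c := 0) (a := a) hr.ne'
    rw [circleAverage] at h
    have h2 := hper.intervalIntegral_add_eq 0 (-π)
    have e1 : -π + 2 * π = π := by ring
    rw [zero_add, e1] at h2
    rw [← integral_Ioc_eq_integral_Ioo, ← intervalIntegral.integral_of_le (by linarith), ← h2]
    have h3 : Real.log r + Real.posLog (r⁻¹ * ‖0 - a‖) = Real.log (max r ‖a‖) := by
      rw [zero_sub, norm_neg]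
      rcases le_total ‖a‖ r with hle | hle
      · rw [max_eq_left hle, (Real.posLog_eq_zero_iff _).2, add_zero]
        rw [abs_of_nonneg (by positivity), inv_mul_le_iff₀ hr]; simpa
      · have ha : 0 < ‖a‖ := hr.trans_le hle
        rw [max_eq_right hle, Real.posLog_eq_log, Real.log_mul (by positivity) (by positivity),
          Real.log_inv]
        · ring
        · rw [abs_of_nonneg (by positivity), le_inv_mul_iff₀ hr]; simpa
    rw [h3] at h
    simp only [smul_eq_mul] at h
    rw [← h]; field_simp

/-! ### Radial growth of the potential of the unit disk -/

lemma integrableOn_log {D : Set R2} (hD : MeasurableSet D) (hb : IsBounded D) (x : R2) :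
    IntegrableOn (fun z : R2 => Real.log ‖x - z‖) D := by
  have hfin : volume D ≠ ⊤ := hb.measure_lt_top.ne
  obtain ⟨R, hR⟩ := hb.subset_closedBall x
  have hi : IntegrableOn (fun z : R2 => ‖x - z‖⁻¹ + R) D :=
    (kernel_bound hfin x one_pos).1.add (integrableOn_const hfin)
  refine hi.mono' (Measurable.aestronglyMeasurable (by fun_prop)) ?_
  rw [ae_restrict_iff' hD]
  refine Filter.Eventually.of_forall fun z hz => ?_
  have h1 : ‖x - z‖ ≤ R := by
    have := hR hz
    rwa [Metric.mem_closedBall, dist_comm, dist_eq_norm] at this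
  rcases (norm_nonneg (x - z)).eq_or_lt with h | h
  · rw [← h] at h1 ⊢; simpa using h1
  · rw [Real.norm_eq_abs, abs_le]
    have h2 := Real.log_le_sub_one_of_pos h
    have h3 := Real.log_le_sub_one_of_pos (inv_pos.2 h)
    rw [Real.log_inv] at h3
    have : 0 < ‖x - z‖⁻¹ := inv_pos.2 h
    constructor <;> linarith

/-- The potential of the unit disk increases radially at a definite rate. The circle means turn the
integral into `2π ∫₀¹ r (log (max r |a|) - log (max r |b|)) dr`, whose integrand is nonnegative and, for
`r ≤ 1/2`, equals `r (log |a| - log |b|) ≥ r (|a| - |b|) / 2`. -/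
lemma disk_slope_complex {a b : ℂ} (ha : 1 / 2 ≤ ‖b‖) (hab : ‖b‖ ≤ ‖a‖) (h2 : ‖a‖ ≤ 2)
    (hint : IntegrableOn (fun z : ℂ => Real.log ‖z - a‖ - Real.log ‖z - b‖) (Metric.ball 0 1)) :
    (‖a‖ - ‖b‖) * (π / 8) ≤
      ∫ z in Metric.ball (0 : ℂ) 1, (Real.log ‖z - a‖ - Real.log ‖z - b‖) := by
  have hpi := Real.pi_pos
  have hb0 : 0 < ‖b‖ := by linarith
  have ha0 : 0 < ‖a‖ := by linarith
  rw [← integral_indicator measurableSet_ball]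
  obtain ⟨hi, he⟩ := polar_fubini
    (f := (Metric.ball (0 : ℂ) 1).indicator fun z => Real.log ‖z - a‖ - Real.log ‖z - b‖)
    (Measurable.indicator (by fun_prop) measurableSet_ball)
    ((integrable_indicator_iff measurableSet_ball).2 hint)
  rw [he]
  have hG : ∀ r ∈ Ioi (0 : ℝ), (∫ θ in Ioo (-π) π, r *
      (Metric.ball (0 : ℂ) 1).indicator (fun z => Real.log ‖z - a‖ - Real.log ‖z - b‖)
        (circleMap 0 r θ)) =
      (Iio 1).indicator (fun r =>
        r * (2 * π * (Real.log (max r ‖a‖) - Real.log (max r ‖b‖)))) r := by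
    intro r (hr : 0 < r)
    by_cases h1 : r < 1
    · have : ∀ θ, circleMap 0 r θ ∈ Metric.ball (0 : ℂ) 1 := by
        intro θ; simp [abs_of_pos hr, h1]
      simp only [this, indicator_of_mem, mem_Iio, h1]
      rw [integral_const_mul, integral_sub (circle_log a hr).1 (circle_log b hr).1,
        (circle_log a hr).2, (circle_log b hr).2]
      ring
    · have : ∀ θ, circleMap 0 r θ ∉ Metric.ball (0 : ℂ) 1 := by
        intro θ; simp [abs_of_pos hr]; linarith
      simp [this, h1]
  rw [integrableOn_congr_fun hG measurableSet_Ioi] at hi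
  rw [setIntegral_congr_fun measurableSet_Ioi hG]
  have hmono : ∀ r : ℝ, 0 < r → Real.log (max r ‖b‖) ≤ Real.log (max r ‖a‖) := fun r hr =>
    Real.log_le_log (by positivity) (max_le_max_left r hab)
  have hlog : (‖a‖ - ‖b‖) / 2 ≤ Real.log ‖a‖ - Real.log ‖b‖ := by
    have h3 := Real.log_le_sub_one_of_pos (div_pos hb0 ha0)
    rw [Real.log_div hb0.ne' ha0.ne'] at h3
    have h4 : (‖a‖ - ‖b‖) / 2 ≤ (‖a‖ - ‖b‖) / ‖a‖ :=
      div_le_div_of_nonneg_left (by linarith) ha0 h2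
    have h5 : (‖a‖ - ‖b‖) / ‖a‖ = 1 - ‖b‖ / ‖a‖ := by field_simp
    linarith
  calc (‖a‖ - ‖b‖) * (π / 8)
      = ∫ r in (0 : ℝ)..(1 / 2), r * (2 * π * ((‖a‖ - ‖b‖) / 2)) := by
        rw [intervalIntegral.integral_mul_const, integral_id]; ring
    _ = ∫ r in Ioc (0 : ℝ) (1 / 2), r * (2 * π * ((‖a‖ - ‖b‖) / 2)) :=
        intervalIntegral.integral_of_le (by norm_num)
    _ ≤ ∫ r in Ioc (0 : ℝ) (1 / 2), (Iio 1).indicator (fun r =>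
        r * (2 * π * (Real.log (max r ‖a‖) - Real.log (max r ‖b‖)))) r := by
        refine setIntegral_mono_on ?_ (hi.mono_set fun r hr => hr.1) measurableSet_Ioc ?_
        · exact Continuous.integrableOn_Ioc (by fun_prop)
        · rintro r ⟨hr, hr2⟩
          have h1 : r < 1 := by linarith
          simp only [mem_Iio, h1, indicator_of_mem]
          rw [max_eq_right (by linarith), max_eq_right (by linarith)]
          gcongr
    _ ≤ _ := by
        refine setIntegral_mono_set hi ?_ (LE.le.eventuallyLE fun r hr => hr.1)
        filter_upwards [ae_restrict_mem measurableSet_Ioi] with r hr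
        refine indicator_apply_nonneg fun _ => ?_
        have := hmono r hr
        have hr' : (0 : ℝ) < r := hr
        have : 0 ≤ Real.log (max r ‖a‖) - Real.log (max r ‖b‖) := by linarith
        positivity

/-- `disk_slope_complex` transported to `ℝ²`. -/
lemma disk_slope {x y : R2} (hy : 1 / 2 ≤ ‖y‖) (hxy : ‖y‖ ≤ ‖x‖) (hx : ‖x‖ ≤ 2) :
    (‖x‖ - ‖y‖) * (π / 8) ≤
      ∫ z in Metric.ball (0 : R2) 1, (Real.log ‖x - z‖ - Real.log ‖y - z‖) := by
  let J := Complex.orthonormalBasisOneI.repr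
  have hJ : MeasurePreserving J volume volume := J.measurePreserving
  have hpre : J ⁻¹' (Metric.ball (0 : R2) 1) = Metric.ball (0 : ℂ) 1 := by
    ext z; simp
  have hn : ∀ (z : ℂ) (x : R2), ‖x - J z‖ = ‖z - J.symm x‖ := by
    intro z x
    rw [← J.norm_map (z - J.symm x), map_sub, J.apply_symm_apply, norm_sub_rev]
  have hme : MeasurableEmbedding J := J.toHomeomorph.measurableEmbedding
  have hint : IntegrableOn (fun z : R2 => Real.log ‖x - z‖ - Real.log ‖y - z‖)
      (Metric.ball 0 1) :=
    (integrableOn_log measurableSet_ball Metric.isBounded_ball x).sub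
      (integrableOn_log measurableSet_ball Metric.isBounded_ball y)
  rw [← hJ.integrableOn_comp_preimage hme, hpre] at hint
  rw [← hJ.setIntegral_preimage_emb hme, hpre]
  simp only [Function.comp_def, hn] at hint ⊢
  simpa using disk_slope_complex (a := J.symm x) (b := J.symm y) (by simpa using hy)
    (by simpa using hxy) (by simpa using hx) hint

/-! ### Radial gaps between points at the same level of the stream function -/

/-- Integrals over two sets differ by at most the integral of the absolute value over their symmetric
difference. -/
lemma symmDiff_bound {D B : Set R2} (hD : MeasurableSet D) (hB : MeasurableSet B) {k : R2 → ℝ}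
    (hkD : IntegrableOn k D) (hkB : IntegrableOn k B) :
    (∫ z in B, k z) - ∫ z in D, k z ≤ ∫ z in symmDiff D B, |k z| := by
  rw [← integral_inter_add_sdiff hD hkB, ← integral_inter_add_sdiff hB hkD, inter_comm B D]
  have hE : symmDiff D B = (D \ B) ∪ (B \ D) := rfl
  have h1 : IntegrableOn k (D \ B) := hkD.mono_set sdiff_subset
  have h2 : IntegrableOn k (B \ D) := hkB.mono_set sdiff_subset
  rw [hE, setIntegral_union disjoint_sdiff_sdiff (hB.diff hD) h1.abs h2.abs]
  have h3 : |∫ z in D \ B, k z| ≤ ∫ z in D \ B, |k z| := abs_integral_le_integral_abs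
  have h4 : |∫ z in B \ D, k z| ≤ ∫ z in B \ D, |k z| := abs_integral_le_integral_abs
  have := neg_abs_le (∫ z in D \ B, k z)
  have := le_abs_self (∫ z in B \ D, k z)
  linarith

/-- If the relative stream function agrees at `x` and `y`, the radial gap `|x| - |y|` is controlled by
the symmetric difference of `D` and the disk: the increment of the disk potential is at least
`(π/8)(|x| - |y|)` by `disk_slope`, and the rotation term absorbs at most half of it since
`Ω ≤ 1/64`. No lower bound on `Ω` is needed, because a negative `Ω` makes that term favourable. -/
lemma radial_gap {D : Set R2} (hD : MeasurableSet D) (hb : IsBounded D) {Ω : ℝ}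
    (hΩ : Ω ≤ 1 / 64) {x y : R2} (hy : 1 / 2 ≤ ‖y‖) (hxy : ‖y‖ ≤ ‖x‖) (hx : ‖x‖ ≤ 2)
    (heq : streamFun D Ω x = streamFun D Ω y) :
    (‖x‖ - ‖y‖) * (π / 16) ≤
      ∫ z in symmDiff D (Metric.ball (0 : R2) 1), |Real.log ‖x - z‖ - Real.log ‖y - z‖| := by
  have hpi := Real.pi_pos
  have hDx := integrableOn_log hD hb x
  have hDy := integrableOn_log hD hb y
  have hBx := integrableOn_log measurableSet_ball (Metric.isBounded_ball (x := (0 : R2)) (r := 1)) x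
  have hBy := integrableOn_log measurableSet_ball (Metric.isBounded_ball (x := (0 : R2)) (r := 1)) y
  have h1 := symmDiff_bound hD measurableSet_ball (hDx.sub hDy) (hBx.sub hBy)
  have h2 := disk_slope hy hxy hx
  simp only [Pi.sub_apply] at h1
  have h3 : ∫ z in D, (Real.log ‖x - z‖ - Real.log ‖y - z‖) =
      2 * π * (Ω / 2 * ‖x‖ ^ 2 - Ω / 2 * ‖y‖ ^ 2) := by
    rw [integral_sub hDx hDy]
    simp only [streamFun, patchConv, nker, integral_const_mul] at heq
    field_simp at heq ⊢
    linarith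
  have h4 : Ω / 2 * ‖x‖ ^ 2 - Ω / 2 * ‖y‖ ^ 2 ≤ (‖x‖ - ‖y‖) / 32 := by
    have e : Ω / 2 * ‖x‖ ^ 2 - Ω / 2 * ‖y‖ ^ 2 = Ω * (‖x‖ + ‖y‖) / 2 * (‖x‖ - ‖y‖) := by ring
    rw [e, div_eq_inv_mul _ (32 : ℝ)]
    refine mul_le_mul_of_nonneg_right ?_ (by linarith)
    nlinarith
  have h5 : 2 * π * (Ω / 2 * ‖x‖ ^ 2 - Ω / 2 * ‖y‖ ^ 2) ≤ 2 * π * ((‖x‖ - ‖y‖) / 32) := by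
    gcongr
  linarith

lemma log_diff_le_lip {A B d : ℝ} (hA : 0 < A) (hB : 0 < B) (hd : |A - B| ≤ d) :
    |Real.log A - Real.log B| ≤ d * (A⁻¹ + B⁻¹) := by
  have h1 := Real.log_le_sub_one_of_pos (div_pos hA hB)
  have h2 := Real.log_le_sub_one_of_pos (div_pos hB hA)
  rw [Real.log_div hA.ne' hB.ne'] at h1
  rw [Real.log_div hB.ne' hA.ne'] at h2
  have h3 : A / B - 1 = (A - B) * B⁻¹ := by field_simp
  have h4 : B / A - 1 = (B - A) * A⁻¹ := by field_simp
  obtain ⟨hd1, hd2⟩ := abs_le.1 hd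
  have hA' := inv_pos.2 hA
  have hB' := inv_pos.2 hB
  rw [abs_le]
  constructor <;> nlinarith

/-- For `B ≥ δ` use `(B + 4)/B ≤ (δ + 4)/δ`; for `B ≤ δ` the loss `log (δ/B)` is at most `δ/B`. -/
lemma log_diff_le_aux {A B δ : ℝ} (hA : 0 < A) (hB : 0 < B) (hδ : 0 < δ) (hd : A ≤ B + 4) :
    Real.log A - Real.log B ≤ Real.log (1 + 4 / δ) + δ * B⁻¹ := by
  have h0 : Real.log A ≤ Real.log (B + 4) := Real.log_le_log hA hd
  have h1 : Real.log (1 + 4 / δ) = Real.log (δ + 4) - Real.log δ := by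
    rw [← Real.log_div (by positivity) (by positivity)]; congr 1; field_simp
  rw [h1]
  rcases le_total δ B with h | h
  · have h2 : Real.log (B + 4) - Real.log B ≤ Real.log (δ + 4) - Real.log δ := by
      rw [← Real.log_div (by positivity) (by positivity),
        ← Real.log_div (by positivity) (by positivity)]
      refine Real.log_le_log (by positivity) ?_
      rw [div_le_div_iff₀ hB hδ]; nlinarith
    have : 0 < δ * B⁻¹ := by positivity
    linarith
  · have h2 : Real.log (B + 4) ≤ Real.log (δ + 4) := Real.log_le_log (by positivity) (by linarith)
    have h3 := Real.log_le_sub_one_of_pos (div_pos hδ hB)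
    rw [Real.log_div hδ.ne' hB.ne', div_eq_mul_inv] at h3
    linarith

/-- A bound on `|log A - log B|` for bounded `|A - B|`: it costs only `log (1/δ)`, except for a term
which has the integrable singularity `1/A + 1/B` with the small coefficient `δ`. -/
lemma log_diff_le_log {A B δ : ℝ} (hA : 0 < A) (hB : 0 < B) (hδ : 0 < δ) (hd : |A - B| ≤ 4) :
    |Real.log A - Real.log B| ≤ Real.log (1 + 4 / δ) + δ * (A⁻¹ + B⁻¹) := by
  obtain ⟨hd1, hd2⟩ := abs_le.1 hd
  have h1 := log_diff_le_aux hA hB hδ (by linarith)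
  have h2 := log_diff_le_aux hB hA hδ (by linarith)
  have : 0 < δ * A⁻¹ := by positivity
  have : 0 < δ * B⁻¹ := by positivity
  rw [abs_le]
  constructor <;> linarith

lemma gap_estimate {E : Set R2} (hfin : volume E ≠ ⊤) {a : ℝ}
    (ha : 0 < a) (hvol : volume.real E = π * a) (x y : R2) :
    IntegrableOn (fun z : R2 => ‖x - z‖⁻¹ + ‖y - z‖⁻¹) E ∧
    ∫ z in E, (‖x - z‖⁻¹ + ‖y - z‖⁻¹) ≤ 6 * π * √a := by
  have hs : 0 < √a := Real.sqrt_pos.2 ha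
  obtain ⟨h1, h2⟩ := kernel_bound hfin x hs
  obtain ⟨h3, h4⟩ := kernel_bound hfin y hs
  refine ⟨h1.add h3, ?_⟩
  rw [integral_add h1 h3]
  have : volume.real E / √a = π * √a := by
    rw [hvol, mul_div_assoc, Real.div_sqrt]
  rw [this] at h2 h4
  linarith

lemma ae_pos (E : Set R2) (x : R2) : ∀ᵐ z ∂(volume.restrict E), 0 < ‖x - z‖ := by
  refine ae_restrict_of_ae ?_
  filter_upwards [compl_mem_ae_iff.2 (measure_singleton (μ := (volume : Measure R2)) x)] with z hz
  rw [norm_pos_iff, sub_ne_zero]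
  exact fun h => hz h.symm

/-- The Lipschitz bound for the integral in `radial_gap`, from `log_diff_le_lip`. -/
lemma est_lip {E : Set R2} (hfin : volume E ≠ ⊤) {a : ℝ} (ha : 0 < a)
    (hvol : volume.real E = π * a) (x y : R2) :
    ∫ z in E, |Real.log ‖x - z‖ - Real.log ‖y - z‖| ≤ ‖x - y‖ * (6 * π * √a) := by
  obtain ⟨h1, h2⟩ := gap_estimate hfin ha hvol x y
  calc _ ≤ ∫ z in E, ‖x - y‖ * (‖x - z‖⁻¹ + ‖y - z‖⁻¹) := by
        refine integral_mono_of_nonneg (Filter.Eventually.of_forall fun z => abs_nonneg _)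
          (h1.const_mul _) ?_
        filter_upwards [ae_pos E x, ae_pos E y] with z hx hy
        refine log_diff_le_lip hx hy ?_
        simpa using abs_norm_sub_norm_le (x - z) (y - z)
    _ ≤ _ := by
        rw [integral_const_mul]; gcongr

/-- The bound of order `a log (1/a)` for the integral in `radial_gap`, from `log_diff_le_log` with
`δ = √a`. -/
lemma est_log {E : Set R2} (hfin : volume E ≠ ⊤) {a : ℝ} (ha : 0 < a)
    (hvol : volume.real E = π * a) {x y : R2} (hxy : ‖x - y‖ ≤ 4) :
    ∫ z in E, |Real.log ‖x - z‖ - Real.log ‖y - z‖| ≤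
      π * a * (Real.log (1 + 4 / √a) + 6) := by
  have hs : 0 < √a := Real.sqrt_pos.2 ha
  obtain ⟨h1, h2⟩ := gap_estimate hfin ha hvol x y
  calc _ ≤ ∫ z in E, (Real.log (1 + 4 / √a) + √a * (‖x - z‖⁻¹ + ‖y - z‖⁻¹)) := by
        refine integral_mono_of_nonneg (Filter.Eventually.of_forall fun z => abs_nonneg _)
          ((integrableOn_const hfin).add (h1.const_mul _)) ?_
        filter_upwards [ae_pos E x, ae_pos E y] with z hx hy
        refine log_diff_le_log hx hy hs (le_trans ?_ hxy)
        simpa using abs_norm_sub_norm_le (x - z) (y - z)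
    _ ≤ _ := by
        have hc : IntegrableOn (fun _ : R2 => Real.log (1 + 4 / √a)) E := integrableOn_const hfin
        rw [integral_add hc (h1.const_mul _), integral_const_mul]
        simp only [integral_const, measureReal_restrict_apply_univ, hvol, smul_eq_mul]
        have h3 : √a * ∫ z in E, (‖x - z‖⁻¹ + ‖y - z‖⁻¹) ≤ √a * (6 * π * √a) := by gcongr
        have h4 : √a * (6 * π * √a) = 6 * π * a := by
          linear_combination 6 * π * Real.mul_self_sqrt ha.le
        linarith

lemma log_arith {a : ℝ} (ha : 0 < a) (h : a ≤ 1 / 16) :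
    Real.log (1 + 4 / √a) + 6 ≤ 5 * |Real.log a| := by
  have hs : 0 < √a := Real.sqrt_pos.2 ha
  have hs1 : √a ≤ 1 := Real.sqrt_le_one.2 (by linarith)
  have h1 : 1 + 4 / √a ≤ 5 / √a := by
    rw [div_add' _ _ _ hs.ne' |> (add_comm _ _).trans, div_le_div_iff_of_pos_right hs]; linarith
  have h2 : Real.log (1 + 4 / √a) ≤ Real.log 5 - Real.log a / 2 := by
    rw [← Real.log_sqrt ha.le, ← Real.log_div (by norm_num) hs.ne']
    exact Real.log_le_log (by positivity) h1
  have h3 : Real.log 5 ≤ 2 := by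
    rw [Real.log_le_iff_le_exp (by norm_num)]
    have := Real.exp_one_gt_d9
    have e : Real.exp 2 = Real.exp 1 * Real.exp 1 := by rw [← Real.exp_add]; norm_num
    rw [e]; nlinarith
  have h4 : Real.log a ≤ -2 := by
    rw [Real.log_le_iff_le_exp ha, Real.exp_neg]
    have := Real.exp_one_lt_d9
    have e : Real.exp 2 = Real.exp 1 * Real.exp 1 := by rw [← Real.exp_add]; norm_num
    refine h.trans ?_
    rw [one_div]
    refine inv_anti₀ (by positivity) ?_
    have := Real.exp_pos 1
    rw [e]; nlinarith
  rw [abs_of_nonpos (by linarith)]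
  linarith

/-- Two level points of the stream function in the annulus `1/2 ≤ |x| ≤ 2` satisfy a Lipschitz
estimate with small constant and a uniform estimate. At `asym0 D = 0` both right-hand sides vanish
(`log 0 = 0`), and so does the gap. -/
lemma boundary_estimates {D : Set R2} (hD : MeasurableSet D) (hb : IsBounded D) {Ω : ℝ}
    (hΩ : Ω ≤ 1 / 64) (ha : asym0 D ≤ 1 / 16) {x y : R2}
    (hx1 : 1 / 2 ≤ ‖x‖) (hx : ‖x‖ ≤ 2) (hy1 : 1 / 2 ≤ ‖y‖) (hy : ‖y‖ ≤ 2)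
    (heq : streamFun D Ω x = streamFun D Ω y) :
    |‖x‖ - ‖y‖| ≤ 96 * √(asym0 D) * ‖x - y‖ ∧
    |‖x‖ - ‖y‖| ≤ 80 * (asym0 D * |Real.log (asym0 D)|) := by
  wlog hxy : ‖y‖ ≤ ‖x‖ generalizing x y
  · have := this hy1 hy hx1 hx heq.symm (not_le.1 hxy).le
    rwa [abs_sub_comm, norm_sub_rev] at this
  have hpi := Real.pi_pos
  have hgap := radial_gap hD hb hΩ hy1 hxy hx heq
  set a := asym0 D with hadef
  have hfin : volume (symmDiff D (Metric.ball (0 : R2) 1)) ≠ ⊤ := by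
    refine ne_top_of_le_ne_top ?_ (measure_mono symmDiff_subset_union)
    exact (hb.union Metric.isBounded_ball).measure_lt_top.ne
  have hvol : volume.real (symmDiff D (Metric.ball (0 : R2) 1)) = π * a := by
    rw [hadef, asym0, measureReal_def]; field_simp
  have ha0 : 0 ≤ a := by rw [hadef, asym0]; positivity
  rw [abs_of_nonneg (by linarith)]
  rcases ha0.eq_or_lt with h0 | h0
  · have hz : volume (symmDiff D (Metric.ball (0 : R2) 1)) = 0 := by
      rw [← h0, mul_zero, measureReal_def, ENNReal.toReal_eq_zero_iff] at hvol
      exact hvol.resolve_right hfin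
    rw [Measure.restrict_eq_zero.2 hz, integral_zero_measure] at hgap
    have : ‖x‖ - ‖y‖ ≤ 0 := by
      by_contra hc
      have : 0 < (‖x‖ - ‖y‖) * (π / 16) := mul_pos (not_le.1 hc) (by positivity)
      linarith
    simp [← h0]; linarith
  · have h1 := est_lip hfin h0 hvol x y
    have hxy4 : ‖x - y‖ ≤ 4 := (norm_sub_le x y).trans (by linarith)
    have h2 := est_log hfin h0 hvol hxy4
    have h3 := log_arith h0 ha
    constructor
    · have : (‖x‖ - ‖y‖) * (π / 16) ≤ (96 * √a * ‖x - y‖) * (π / 16) := by linarith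
      exact le_of_mul_le_mul_right this (by positivity)
    · have h4 : π * a * (Real.log (1 + 4 / √a) + 6) ≤ π * a * (5 * |Real.log a|) := by gcongr
      have : (‖x‖ - ‖y‖) * (π / 16) ≤ (80 * (a * |Real.log a|)) * (π / 16) := by linarith
      exact le_of_mul_le_mul_right this (by positivity)

/-! ### Localization of the boundary near the unit circle -/

lemma polar_zero (r θ : ℝ) : polar r θ 0 = r * Real.cos θ := rfl
lemma polar_one (r θ : ℝ) : polar r θ 1 = r * Real.sin θ := rfl

lemma norm_sq_R2 (x : R2) : ‖x‖ ^ 2 = x 0 ^ 2 + x 1 ^ 2 := by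
  rw [EuclideanSpace.real_norm_sq_eq, Fin.sum_univ_two]

lemma ext_R2 {x y : R2} (h0 : x 0 = y 0) (h1 : x 1 = y 1) : x = y := by
  ext i; fin_cases i <;> assumption

lemma norm_polar (r θ : ℝ) : ‖polar r θ‖ = |r| := by
  have h : ‖polar r θ‖ ^ 2 = |r| ^ 2 := by
    rw [norm_sq_R2, polar_zero, polar_one, sq_abs]
    linear_combination r ^ 2 * Real.sin_sq_add_cos_sq θ
  exact (sq_eq_sq₀ (norm_nonneg _) (abs_nonneg _)).1 h

lemma exists_polar (x : R2) : ∃ θ, x = polar ‖x‖ θ := by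
  have hn : ‖(⟨x 0, x 1⟩ : ℂ)‖ = ‖x‖ := by
    refine (sq_eq_sq₀ (norm_nonneg _) (norm_nonneg _)).1 ?_
    rw [norm_sq_R2, Complex.sq_norm, Complex.normSq_mk]; ring
  refine ⟨Complex.arg ⟨x 0, x 1⟩, ext_R2 ?_ ?_⟩
  · rw [polar_zero, ← hn, Complex.norm_mul_cos_arg]
  · rw [polar_one, ← hn, Complex.norm_mul_sin_arg]

lemma continuous_polar : Continuous fun p : ℝ × ℝ => polar p.1 p.2 := by
  refine (PiLp.continuous_toLp 2 _).comp (continuous_pi fun i => ?_)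
  fin_cases i
  · exact continuous_fst.mul (Real.continuous_cos.comp continuous_snd)
  · exact continuous_fst.mul (Real.continuous_sin.comp continuous_snd)

lemma polar_sub (r s θ : ℝ) : ‖polar r θ - polar s θ‖ = |r - s| := by
  rw [← norm_polar (r - s) θ]
  congr 1
  refine ext_R2 ?_ ?_
  · simp only [PiLp.sub_apply, polar_zero]; ring
  · simp only [PiLp.sub_apply, polar_one]; ring

lemma polar_periodic (r θ : ℝ) : polar r (θ + 2 * π) = polar r θ := by
  simp [polar]

/-- Annuli, disks, punctured disks and exteriors of disks are connected, as images under polar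
coordinates of a strip or half-plane. -/
lemma isPreconnected_annulus {S : Set ℝ} (hS : S.OrdConnected) (hpos : ∀ r ∈ S, 0 ≤ r) :
    IsPreconnected {x : R2 | ‖x‖ ∈ S} := by
  have : {x : R2 | ‖x‖ ∈ S} = (fun p : ℝ × ℝ => polar p.1 p.2) '' (S ×ˢ univ) := by
    ext x
    constructor
    · intro hx
      obtain ⟨θ, hθ⟩ := exists_polar x
      exact ⟨(‖x‖, θ), ⟨hx, mem_univ _⟩, hθ.symm⟩
    · rintro ⟨⟨r, θ⟩, ⟨hr, -⟩, rfl⟩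
      simpa [norm_polar, abs_of_nonneg (hpos r hr)] using hr
  rw [this]
  exact (hS.isPreconnected.prod isPreconnected_univ).image _ continuous_polar.continuousOn

/-- A connected set meeting both `D` and its complement meets the boundary of `D`. -/
lemma frontier_inter_nonempty {D S : Set R2} (hD : IsOpen D) (hS : IsPreconnected S) {p q : R2}
    (hp : p ∈ S) (hpD : p ∈ D) (hq : q ∈ S) (hqD : q ∉ D) : ∃ x ∈ S, x ∈ frontier D := by
  by_contra! hc
  have hcl := isClopen_preimage_val hD (disjoint_right.2 hc)
  have : PreconnectedSpace S := isPreconnected_iff_preconnectedSpace.1 hS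
  have := hcl.eq_univ ⟨⟨p, hp⟩, hpD⟩
  have hq' : (⟨q, hq⟩ : S) ∈ (Subtype.val ⁻¹' D : Set S) := this ▸ mem_univ _
  exact hqD hq'

lemma volume_ball_R2 (r : ℝ) (hr : 0 ≤ r) :
    volume (Metric.ball (0 : R2) r) = ENNReal.ofReal (π * r ^ 2) := by
  rw [EuclideanSpace.volume_ball_fin_two, mul_comm, ENNReal.ofReal_mul Real.pi_pos.le,
    ENNReal.ofReal_pow hr]

lemma volume_closedBall_R2 (r : ℝ) (hr : 0 ≤ r) :
    volume (Metric.closedBall (0 : R2) r) = ENNReal.ofReal (π * r ^ 2) := by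
  rw [Measure.addHaar_closedBall_eq_addHaar_ball, volume_ball_R2 r hr]

/-- An annulus of area larger than `|D Δ B|` is not contained in `D Δ B`. -/
lemma not_subset_symmDiff {D : Set R2} (hb : IsBounded D) {r s : ℝ} (hr : 0 ≤ r) (hs : 0 ≤ s)
    (h : asym0 D < s ^ 2 - r ^ 2) :
    ∃ x : R2, r < ‖x‖ ∧ ‖x‖ < s ∧ x ∉ symmDiff D (Metric.ball (0 : R2) 1) := by
  by_contra! hc
  have hpi := Real.pi_pos
  have hsub : Metric.ball (0 : R2) s \ Metric.closedBall 0 r ⊆ symmDiff D (Metric.ball 0 1) := by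
    intro x hx
    refine hc x ?_ ?_
    · simpa using hx.2
    · simpa using hx.1
  have hfin : volume (symmDiff D (Metric.ball (0 : R2) 1)) ≠ ⊤ := by
    refine ne_top_of_le_ne_top ?_ (measure_mono symmDiff_subset_union)
    exact (hb.union Metric.isBounded_ball).measure_lt_top.ne
  have h1 := le_measure_sdiff (μ := volume) (s₁ := Metric.ball (0 : R2) s)
    (s₂ := Metric.closedBall 0 r)
  have h2 := h1.trans (measure_mono hsub)
  rw [volume_ball_R2 s hs, volume_closedBall_R2 r hr,
    ← ENNReal.ofReal_sub _ (by positivity)] at h2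
  have h3 := ENNReal.toReal_mono hfin h2
  rw [ENNReal.toReal_ofReal'] at h3
  have h5 := (le_max_left _ _).trans h3
  rw [asym0, div_lt_iff₀ hpi] at h
  linarith

/-- If the norms of boundary points in the annulus `1/2 ≤ |x| ≤ 2` differ by at most `ε`, then the
whole boundary lies in `| |x| - 1 | ≤ ε`. A boundary point `s` near the unit circle exists since
`D Δ B` is small. The set of norms of boundary points is an interval, so it cannot leave
`[|s| - ε, |s| + ε]` without violating the assumption. Finally `|D| = π` excludes `D` containing a disk
of radius greater than `1` or being contained in a disk of radius less than `1`. -/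
lemma localization {D : Set R2} (hD : IsOpen D) (hb : IsBounded D)
    (hvol : volume D = ENNReal.ofReal π) (ha : asym0 D < 1 / 16)
    (hconn : IsPreconnected (frontier D)) {ε : ℝ} (hε0 : 0 ≤ ε) (hε : ε < 1 / 8)
    (hgap : ∀ x ∈ frontier D, ∀ y ∈ frontier D, 1 / 2 ≤ ‖x‖ → ‖x‖ ≤ 2 → 1 / 2 ≤ ‖y‖ → ‖y‖ ≤ 2 →
      |‖x‖ - ‖y‖| ≤ ε) :
    (∀ x ∈ frontier D, |‖x‖ - 1| ≤ ε) ∧ Metric.ball 0 (1 - ε) ⊆ D ∧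
      D ⊆ Metric.closedBall 0 (1 + ε) := by
  have hpi := Real.pi_pos
  obtain ⟨s, hs, hs1, hs2⟩ : ∃ s ∈ frontier D, 3 / 4 < ‖s‖ ∧ ‖s‖ < 5 / 4 := by
    obtain ⟨p, hp1, hp2, hp⟩ := not_subset_symmDiff hb (r := 3 / 4) (s := 1) (by norm_num)
      (by norm_num) (by linarith)
    obtain ⟨q, hq1, hq2, hq⟩ := not_subset_symmDiff hb (r := 1) (s := 5 / 4) (by norm_num)
      (by norm_num) (by linarith)
    have hpD : p ∈ D := by
      by_contra hc
      exact hp (Or.inr ⟨by simpa using hp2, hc⟩)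
    have hqD : q ∉ D := by
      intro hc
      exact hq (Or.inl ⟨hc, by simp; linarith⟩)
    obtain ⟨x, hx, hxD⟩ := frontier_inter_nonempty hD
      (isPreconnected_annulus (S := Ioo (3 / 4) (5 / 4)) ordConnected_Ioo
        (fun r hr => by linarith [hr.1])) (p := p) (q := q) ⟨hp1, by linarith⟩ hpD
        ⟨by linarith, hq2⟩ hqD
    exact ⟨x, hxD, hx⟩
  have hI : (norm '' frontier D).OrdConnected :=
    (hconn.image _ continuous_norm.continuousOn).ordConnected
  have hnear : ∀ x ∈ frontier D, |‖x‖ - ‖s‖| ≤ ε := by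
    intro x hx
    by_contra! hc
    rcases lt_abs.1 hc with h | h
    -- the norm is truncated at `‖s‖ + 1/8` so that the comparison point stays in the annulus
    · obtain ⟨y, hy, hy2⟩ := hI.out ⟨s, hs, rfl⟩ ⟨x, hx, rfl⟩
        (show min ‖x‖ (‖s‖ + 1 / 8) ∈ Icc ‖s‖ ‖x‖ from
          ⟨le_min (by linarith) (by linarith), min_le_left _ _⟩)
      have h3 : ‖s‖ + ε < ‖y‖ := by rw [hy2]; exact lt_min (by linarith) (by linarith)
      have h4 : ‖y‖ ≤ ‖s‖ + 1 / 8 := by rw [hy2]; exact min_le_right _ _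
      have := (abs_le.1 (hgap y hy s hs (by linarith) (by linarith) (by linarith)
        (by linarith))).2
      linarith
    · obtain ⟨y, hy, hy2⟩ := hI.out ⟨x, hx, rfl⟩ ⟨s, hs, rfl⟩
        (show max ‖x‖ (‖s‖ - 1 / 8) ∈ Icc ‖x‖ ‖s‖ from
          ⟨le_max_left _ _, max_le (by linarith) (by linarith)⟩)
      have h3 : ‖y‖ < ‖s‖ - ε := by rw [hy2]; exact max_lt (by linarith) (by linarith)
      have h4 : ‖s‖ - 1 / 8 ≤ ‖y‖ := by rw [hy2]; exact le_max_right _ _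
      have := (abs_le.1 (hgap s hs y hy (by linarith) (by linarith) (by linarith)
        (by linarith))).2
      linarith
  have hmem : ∀ x ∈ frontier D, 1 / 2 ≤ ‖x‖ ∧ ‖x‖ ≤ 2 := by
    intro x hx
    have := abs_le.1 (hnear x hx)
    constructor <;> linarith
  have hpair : ∀ x ∈ frontier D, ∀ y ∈ frontier D, |‖x‖ - ‖y‖| ≤ ε := fun x hx y hy =>
    hgap x hx y hy (hmem x hx).1 (hmem x hx).2 (hmem y hy).1 (hmem y hy).2
  have hin : ∀ ρ, 1 / 2 ≤ ρ → (∀ x ∈ frontier D, ρ ≤ ‖x‖) → Metric.ball 0 ρ ⊆ D := by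
    intro ρ hρ hf q hq
    by_contra hqD
    obtain ⟨p, -, hp2, hp⟩ := not_subset_symmDiff hb (r := 0) (s := 1 / 2) (by norm_num)
      (by norm_num) (by linarith)
    have hpD : p ∈ D := by
      by_contra hc
      exact hp (Or.inr ⟨by simp; linarith, hc⟩)
    obtain ⟨x, hx, hxD⟩ := frontier_inter_nonempty hD Metric.isPreconnected_ball
      (p := p) (q := q) (S := Metric.ball 0 ρ) (by simp; linarith) hpD hq hqD
    have := hf x hxD
    simp at hx
    linarith
  have hout : ∀ ρ, 0 ≤ ρ → (∀ x ∈ frontier D, ‖x‖ ≤ ρ) → D ⊆ Metric.closedBall 0 ρ := by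
    intro ρ hρ hf p hp
    by_contra hpB
    obtain ⟨R, hR⟩ := hb.subset_closedBall (0 : R2)
    have hq : ‖polar (max ρ R + 1) 0‖ = max ρ R + 1 := by
      rw [norm_polar, abs_of_nonneg]
      have := le_max_left ρ R
      linarith
    have hqD : polar (max ρ R + 1) 0 ∉ D := by
      intro hc
      have h1 := hR hc
      rw [mem_closedBall_zero_iff, hq] at h1
      have := le_max_right ρ R
      linarith
    obtain ⟨x, hx, hxD⟩ := frontier_inter_nonempty hD
      (isPreconnected_annulus (S := Ioi ρ) ordConnected_Ioi
        (fun r hr => hρ.trans (le_of_lt hr))) (p := p) (q := polar (max ρ R + 1) 0)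
        (by simpa using hpB) hp (by
          change ρ < _
          rw [hq]
          have := le_max_left ρ R
          linarith) hqD
    exact absurd (hf x hxD) (not_le.2 hx)
  have hone : ∀ x ∈ frontier D, |‖x‖ - 1| ≤ ε := by
    intro x hx
    by_contra! hc
    rcases lt_abs.1 hc with h | h
    · have h1 := hin (‖x‖ - ε) (by linarith) (fun y hy => by
        have := abs_le.1 (hpair x hx y hy); linarith)
      have h2 := measure_mono (μ := volume) h1
      rw [hvol, volume_ball_R2 _ (by linarith), ENNReal.ofReal_le_ofReal_iff hpi.le] at h2
      have : 1 < (‖x‖ - ε) ^ 2 := by nlinarith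
      nlinarith
    · have h1 := hout (‖x‖ + ε) (by positivity) (fun y hy => by
        have := abs_le.1 (hpair x hx y hy); linarith)
      have h2 := measure_mono (μ := volume) h1
      rw [hvol, volume_closedBall_R2 _ (by positivity),
        ENNReal.ofReal_le_ofReal_iff (by positivity)] at h2
      have : (‖x‖ + ε) ^ 2 < 1 := by
        have : 0 ≤ ‖x‖ := norm_nonneg x
        nlinarith
      nlinarith
  refine ⟨hone, hin _ (by linarith) fun x hx => ?_, hout _ (by linarith) fun x hx => ?_⟩
  · have := abs_le.1 (hone x hx); linarith
  · have := abs_le.1 (hone x hx); linarith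

/-! ### The boundary as a polar graph -/

/-- Regularity of the polar radius of a curve which meets every ray exactly once. In the orthonormal
frame rotated by `θ₀` the curve has coordinates `(p, q)`, and `q/p` is the tangent of the polar angle
relative to `θ₀`. The Lipschitz estimate bounds the radial velocity by half the speed, so the
velocity is not radial and the derivative of `q` is nonzero. The inverse function theorem then
expresses the curve parameter as a `C²` function `τ` of the tangent of the angle, and `r θ = p (τ
(tan (θ - θ₀))) / cos (θ - θ₀)` near `θ₀`. -/
lemma graph_contDiff {γ : ℝ → R2} (hγ : ContDiff ℝ 2 γ) (hγ' : ∀ t, deriv γ t ≠ 0)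
    {F : Set R2} (hF : range γ = F)
    (hlip : ∀ x ∈ F, ∀ y ∈ F, |‖x‖ - ‖y‖| ≤ 1 / 2 * ‖x - y‖)
    {r : ℝ → ℝ} (hr0 : ∀ θ, 0 < r θ) (hrF : ∀ θ, polar (r θ) θ ∈ F)
    (huniq : ∀ s θ, 0 < s → polar s θ ∈ F → s = r θ) : ContDiff ℝ 2 r := by
  rw [contDiff_iff_contDiffAt]
  intro θ₀
  obtain ⟨t₀, ht₀⟩ : ∃ t₀, γ t₀ = polar (r θ₀) θ₀ := by
    have := hrF θ₀
    rwa [← hF] at this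
  have hcs := Real.sin_sq_add_cos_sq θ₀
  set c := Real.cos θ₀ with hc
  set s := Real.sin θ₀ with hs
  have hcoord : ∀ i : Fin 2, ContDiff ℝ 2 fun t => γ t i := fun i =>
    (EuclideanSpace.proj (𝕜 := ℝ) i).contDiff.comp hγ
  set p : ℝ → ℝ := fun t => c * γ t 0 + s * γ t 1 with hp
  set q : ℝ → ℝ := fun t => -s * γ t 0 + c * γ t 1 with hq
  have hpC : ContDiff ℝ 2 p := (contDiff_const.mul (hcoord 0)).add (contDiff_const.mul (hcoord 1))
  have hqC : ContDiff ℝ 2 q := (contDiff_const.mul (hcoord 0)).add (contDiff_const.mul (hcoord 1))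
  have hp0 : p t₀ = r θ₀ := by
    simp only [hp, ht₀, polar_zero, polar_one, ← hc, ← hs]
    linear_combination r θ₀ * hcs
  have hq0 : q t₀ = 0 := by
    simp only [hq, ht₀, polar_zero, polar_one, ← hc, ← hs]
    ring
  have hpos : 0 < p t₀ := hp0 ▸ hr0 θ₀
  have hnorm : ∀ t, ‖γ t‖ = √(p t ^ 2 + q t ^ 2) := by
    intro t
    rw [← Real.sqrt_sq (norm_nonneg (γ t)), norm_sq_R2]
    congr 1
    simp only [hp, hq]
    linear_combination (-(γ t 0 ^ 2) - γ t 1 ^ 2) * hcs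
  have hγd : HasDerivAt γ (deriv γ t₀) t₀ :=
    ((hγ.differentiable (by norm_num)) t₀).hasDerivAt
  set v := deriv γ t₀ with hv
  have hcd : ∀ i : Fin 2, HasDerivAt (fun t => γ t i) (v i) t₀ := fun i =>
    (EuclideanSpace.proj (𝕜 := ℝ) i).hasFDerivAt.comp_hasDerivAt t₀ hγd
  have hpd : HasDerivAt p (c * v 0 + s * v 1) t₀ :=
    ((hcd 0).const_mul c).add ((hcd 1).const_mul s)
  have hqd : HasDerivAt q (-s * v 0 + c * v 1) t₀ :=
    ((hcd 0).const_mul (-s)).add ((hcd 1).const_mul c)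
  set p' := c * v 0 + s * v 1 with hp'
  set q' := -s * v 0 + c * v 1 with hq'
  have hnd : HasDerivAt (fun t => ‖γ t‖) p' t₀ := by
    have h := ((hpd.pow 2).add (hqd.pow 2)).sqrt (by
      simp only [Pi.add_apply, Pi.pow_apply, hq0]; positivity)
    have h2 : (fun t => ‖γ t‖) = fun t => √((p ^ 2 + q ^ 2) t) := by
      funext t; exact hnorm t
    rw [h2]
    refine h.congr_deriv ?_
    simp only [Pi.add_apply, Pi.pow_apply, hq0]
    rw [show p t₀ ^ 2 + 0 ^ 2 = p t₀ ^ 2 by ring, Real.sqrt_sq hpos.le]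
    field_simp
    norm_num
    ring
  have hvn : ‖v‖ ^ 2 = p' ^ 2 + q' ^ 2 := by
    rw [norm_sq_R2, hp', hq']
    linear_combination (-(v 0 ^ 2) - v 1 ^ 2) * hcs
  -- the Lipschitz estimate passes to the limit in the difference quotients
  have hineq : |p'| ≤ 1 / 2 * ‖v‖ := by
    rw [hasDerivAt_iff_tendsto_slope] at hnd hγd
    refine le_of_tendsto_of_tendsto' hnd.norm (hγd.norm.const_mul (1 / 2)) fun t => ?_
    simp only [slope, vsub_eq_sub, norm_smul]
    have := hlip (γ t) (hF ▸ mem_range_self t) (γ t₀) (hF ▸ mem_range_self t₀)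
    calc ‖(t - t₀)⁻¹‖ * ‖‖γ t‖ - ‖γ t₀‖‖ ≤ ‖(t - t₀)⁻¹‖ * (1 / 2 * ‖γ t - γ t₀‖) := by
          gcongr; exact this
      _ = _ := by ring
  have hq'0 : q' ≠ 0 := by
    intro h0
    rw [h0] at hvn
    have h1 : ‖v‖ = |p'| := by
      refine (sq_eq_sq₀ (norm_nonneg _) (abs_nonneg _)).1 ?_
      rw [hvn, sq_abs]; ring
    have h2 : ‖v‖ = 0 := by
      have := norm_nonneg v
      linarith
    exact hγ' t₀ (norm_eq_zero.1 h2)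
  set h : ℝ → ℝ := fun t => q t / p t with hh
  have hhC : ContDiffAt ℝ 2 h t₀ := hqC.contDiffAt.div hpC.contDiffAt hpos.ne'
  have hhd : HasDerivAt h (q' / p t₀) t₀ := by
    refine (hqd.div hpd hpos.ne').congr_deriv ?_
    rw [hq0]; field_simp; ring
  have hne : q' / p t₀ ≠ 0 := div_ne_zero hq'0 hpos.ne'
  have hhF : HasFDerivAt h
      ((ContinuousLinearEquiv.unitsEquivAut ℝ (Units.mk0 _ hne) : ℝ ≃L[ℝ] ℝ) : ℝ →L[ℝ] ℝ) t₀ := by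
    refine hhd.hasFDerivAt.congr_fderiv ?_
    ext; simp
  have h20 : (2 : WithTop ℕ∞) ≠ 0 := by norm_num
  set τ := hhC.localInverse hhF h20 with hτ
  have hτC : ContDiffAt ℝ 2 τ (h t₀) := hhC.to_localInverse hhF h20
  have hh0 : h t₀ = 0 := by simp [hh, hq0]
  have hτ0 : τ 0 = t₀ := by
    rw [← hh0]; exact hhC.localInverse_apply_image hhF h20
  have hτinv : ∀ᶠ y in nhds 0, h (τ y) = y := by
    have := (hhC.hasStrictFDerivAt' hhF h20).eventually_right_inverse
    rw [hh0] at this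
    exact this
  rw [hh0] at hτC
  have hcos0 : Real.cos (θ₀ - θ₀) ≠ 0 := by simp
  have htanC : ContDiffAt ℝ 2 (fun θ => Real.tan (θ - θ₀)) θ₀ :=
    ContDiffAt.comp (g := Real.tan) (f := fun θ => θ - θ₀) θ₀ (Real.contDiffAt_tan.2 hcos0)
      (contDiffAt_id.sub contDiffAt_const)
  have hcomp : ContDiffAt ℝ 2 (fun θ => τ (Real.tan (θ - θ₀))) θ₀ :=
    ContDiffAt.comp (g := τ) (f := fun θ => Real.tan (θ - θ₀)) θ₀
      (by rw [sub_self, Real.tan_zero]; exact hτC) htanC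
  have htan0 : Filter.Tendsto (fun θ => Real.tan (θ - θ₀)) (nhds θ₀) (nhds 0) := by
    have := htanC.continuousAt.tendsto
    simpa using this
  have hcompt : Filter.Tendsto (fun θ => p (τ (Real.tan (θ - θ₀)))) (nhds θ₀) (nhds (p t₀)) := by
    have h1 := (hpC.continuous.continuousAt.comp hcomp.continuousAt).tendsto
    simpa [Function.comp_def, hτ0] using h1
  have hcost : Filter.Tendsto (fun θ => Real.cos (θ - θ₀)) (nhds θ₀) (nhds 1) := by
    have h1 : Continuous fun θ => Real.cos (θ - θ₀) := by fun_prop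
    have := h1.tendsto θ₀
    simpa using this
  have hfinal : ContDiffAt ℝ 2
      (fun θ => p (τ (Real.tan (θ - θ₀))) / Real.cos (θ - θ₀)) θ₀ := by
    refine ContDiffAt.div (hpC.contDiffAt.comp θ₀ hcomp) ?_ hcos0
    exact (Real.contDiff_cos.comp (contDiff_id.sub contDiff_const)).contDiffAt
  refine hfinal.congr_of_eventuallyEq ?_
  filter_upwards [hcompt.eventually (lt_mem_nhds hpos), hcost.eventually (lt_mem_nhds one_pos),
    htan0.eventually hτinv] with θ h1 h2 h3
  refine (huniq _ θ (div_pos h1 h2) ?_).symm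
  set t := τ (Real.tan (θ - θ₀))
  have h4 : q t = p t / Real.cos (θ - θ₀) * Real.sin (θ - θ₀) := by
    rw [Real.tan_eq_sin_div_cos] at h3
    simp only [hh] at h3
    rw [div_eq_div_iff h1.ne' h2.ne'] at h3
    field_simp
    linarith
  have h5 : p t = p t / Real.cos (θ - θ₀) * Real.cos (θ - θ₀) := by field_simp
  have hθ : θ = θ₀ + (θ - θ₀) := by ring
  have : polar (p t / Real.cos (θ - θ₀)) θ = γ t := by
    refine ext_R2 ?_ ?_
    · rw [polar_zero]
      nth_rw 2 [hθ]
      rw [Real.cos_add, ← hc, ← hs]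
      have e : γ t 0 = c * p t - s * q t := by
        simp only [hp, hq]; linear_combination (-(γ t 0)) * hcs
      rw [e, h4]
      linear_combination (-c) * h5
    · rw [polar_one]
      nth_rw 2 [hθ]
      rw [Real.sin_add, ← hc, ← hs]
      have e : γ t 1 = s * p t + c * q t := by
        simp only [hp, hq]; linear_combination (-(γ t 1)) * hcs
      rw [e, h4]
      linear_combination (-s) * h5
  rw [this, ← hF]
  exact mem_range_self t

lemma mul_log_le_sqrt {a : ℝ} (h0 : 0 ≤ a) (h1 : a ≤ 1) : a * |Real.log a| ≤ 2 * √a := by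
  rcases h0.eq_or_lt with h | h
  · simp [← h]
  · have hs : 0 < √a := Real.sqrt_pos.2 h
    have h2 := Real.log_le_sub_one_of_pos (inv_pos.2 hs)
    rw [Real.log_inv, Real.log_sqrt h.le] at h2
    rw [abs_of_nonpos (Real.log_nonpos h0 h1)]
    have h3 : -Real.log a ≤ 2 * (√a)⁻¹ := by linarith
    calc a * -Real.log a ≤ a * (2 * (√a)⁻¹) := by gcongr
      _ = 2 * (a / √a) := by ring
      _ = _ := by rw [Real.div_sqrt]

/-- If `Ω < Ω₂` and `𝒜₀(D) < α₂`, then `D` is star-shaped with a `C¹`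
polar graph boundary `1 + u` and `‖u‖_{L∞} ≤ c₂ 𝒜₀(D)|log 𝒜₀(D)|`. -/
theorem small_asymmetry_starshaped :
    ∃ Ω₂ > (0 : ℝ), ∃ α₂ > (0 : ℝ), ∃ c₂ > (0 : ℝ),
      ∀ (D : Set R2) (Ω : ℝ), IsPatchSolution D Ω → volume D = ENNReal.ofReal π →
        Ω < Ω₂ → asym0 D < α₂ →
        ∃ u : ℝ → ℝ, ContDiff ℝ 1 u ∧ Function.Periodic u (2 * π) ∧
          (∀ θ : ℝ, -1 < u θ) ∧ frontier D = polarGraph u ∧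
          ∀ θ : ℝ, |u θ| ≤ c₂ * asym0 D * |Real.log (asym0 D)| := by
  refine ⟨1 / 64, by norm_num, 1 / 10 ^ 8, by norm_num, 80, by norm_num, ?_⟩
  rintro D Ω ⟨hopen, hb, -, ⟨γ, hγ, -, -, hγ', hrange⟩, ⟨C, hC⟩⟩ hvol hΩ ha
  have ha0 : 0 ≤ asym0 D := by unfold asym0; positivity
  have hsq : √(asym0 D) ≤ 1 / 10 ^ 4 := by
    rw [Real.sqrt_le_left (by norm_num)]
    refine ha.le.trans ?_
    norm_num
  have ha1 : asym0 D < 1 / 16 := ha.trans (by norm_num)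
  set ε := 80 * (asym0 D * |Real.log (asym0 D)|) with hεdef
  have hε0 : 0 ≤ ε := by positivity
  have hε : ε < 1 / 8 := by
    have := mul_log_le_sqrt ha0 (by linarith)
    have : ε ≤ 80 * (2 * (1 / 10 ^ 4)) := by linarith
    refine this.trans_lt (by norm_num)
  have hest : ∀ x ∈ frontier D, ∀ y ∈ frontier D, 1 / 2 ≤ ‖x‖ → ‖x‖ ≤ 2 → 1 / 2 ≤ ‖y‖ → ‖y‖ ≤ 2 →
      |‖x‖ - ‖y‖| ≤ 96 * √(asym0 D) * ‖x - y‖ ∧ |‖x‖ - ‖y‖| ≤ ε :=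
    fun x hx y hy hx1 hx2 hy1 hy2 => boundary_estimates hopen.measurableSet hb hΩ.le ha1.le
      hx1 hx2 hy1 hy2 ((hC x hx).trans (hC y hy).symm)
  have hconn : IsPreconnected (frontier D) := by
    rw [← hrange]; exact isPreconnected_range hγ.continuous
  obtain ⟨hone, hin, hout⟩ := localization hopen hb hvol ha1 hconn hε0 hε
    fun x hx y hy h1 h2 h3 h4 => (hest x hx y hy h1 h2 h3 h4).2
  have hmem : ∀ x ∈ frontier D, 1 / 2 ≤ ‖x‖ ∧ ‖x‖ ≤ 2 := by
    intro x hx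
    have := abs_le.1 (hone x hx)
    constructor <;> linarith
  have hlip : ∀ x ∈ frontier D, ∀ y ∈ frontier D, |‖x‖ - ‖y‖| ≤ 1 / 2 * ‖x - y‖ := by
    intro x hx y hy
    refine (hest x hx y hy (hmem x hx).1 (hmem x hx).2 (hmem y hy).1 (hmem y hy).2).1.trans ?_
    gcongr
    linarith
  -- each ray starts inside `D` and ends outside it
  have hex : ∀ θ, ∃ r, 0 < r ∧ polar r θ ∈ frontier D := by
    intro θ
    have hS : IsPreconnected ((fun r => polar r θ) '' Icc (1 / 2) 2) :=
      isPreconnected_Icc.image _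
        (continuous_polar.comp (Continuous.prodMk_left θ)).continuousOn
    obtain ⟨x, ⟨r, hr, rfl⟩, hx⟩ := frontier_inter_nonempty hopen hS
      (mem_image_of_mem _ (show (1 / 2 : ℝ) ∈ Icc (1 / 2 : ℝ) 2 by constructor <;> norm_num))
      (hin (by rw [mem_ball_zero_iff, norm_polar, abs_of_pos (by norm_num)]; linarith))
      (mem_image_of_mem _ (show (2 : ℝ) ∈ Icc (1 / 2 : ℝ) 2 by constructor <;> norm_num))
      (fun hc => by
        have := hout hc
        rw [mem_closedBall_zero_iff, norm_polar, abs_of_pos (by norm_num)] at this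
        linarith)
    exact ⟨r, by linarith [hr.1], hx⟩
  choose r hr0 hrF using hex
  -- on a single ray the Lipschitz estimate reads `|s - r θ| ≤ |s - r θ| / 2`
  have huniq : ∀ s θ, 0 < s → polar s θ ∈ frontier D → s = r θ := by
    intro s θ hs hsF
    have h := hlip _ hsF _ (hrF θ)
    rw [norm_polar, norm_polar, polar_sub, abs_of_pos hs, abs_of_pos (hr0 θ)] at h
    have h1 : |s - r θ| = 0 := le_antisymm (by linarith) (abs_nonneg _)
    linarith [abs_eq_zero.1 h1]
  have hrC : ContDiff ℝ 2 r := graph_contDiff hγ hγ' hrange hlip hr0 hrF huniq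
  refine ⟨fun θ => r θ - 1, (hrC.sub contDiff_const).of_le (by norm_num), ?_, ?_, ?_, ?_⟩
  · intro θ
    have := huniq (r θ) (θ + 2 * π) (hr0 θ) (by rw [polar_periodic]; exact hrF θ)
    simp only [this]
  · intro θ
    have := hr0 θ
    linarith
  · ext x
    constructor
    · intro hx
      obtain ⟨θ, hθ⟩ := exists_polar x
      refine ⟨θ, ?_⟩
      have hpos : 0 < ‖x‖ := by linarith [(hmem x hx).1]
      have := huniq ‖x‖ θ hpos (by rw [← hθ]; exact hx)
      rw [add_sub_cancel, ← this]
      exact hθ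
    · rintro ⟨θ, rfl⟩
      rw [add_sub_cancel]
      exact hrF θ
  · intro θ
    have := hone _ (hrF θ)
    rw [norm_polar, abs_of_pos (hr0 θ)] at this
    rw [mul_assoc]
    exact this
end
end

section
/- Let D ⊂ ℝ² be a bounded open set. Define g : [0, ∞) → ℝ by g(r) = ℋ¹(∂B_r ∩ D)/(2πr) for r > 0 (and g(0) = 0), regarded as the radial function x ↦ g(|x|) on ℝ², and let φ^r = g * N. Then φ^r is a radial function and for every r > 0 its radial derivative satisfies ∂_r φ^r(r) = |D ∩ B_r|/(2πr); equivalently, ∇(g * N)(x) = (|D ∩ B_{|x|}|/(2π|x|²)) · x for all x ≠ 0. -/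
/-!
After identifying `ℝ²` with `ℂ`, let `m(s)` be the measure of the set of angles `θ ∈ (-π, π)` with
`s e^{iθ} ∈ D` (`angMeas`). Since `ℋ¹` on a circle is arc length (`hausdorff_circleMap_image`),
`g(s) = m(s) / (2π)` for `s > 0`. The mean of `log |x - ·|` over the circle of radius `s` is
`log max(|x|, s)` (`integral_log_circle`), so polar coordinates and Fubini's theorem give, for
`x ≠ 0`,

  `(g * N)(x) = (2π)⁻¹ ∫₀^∞ s m(s) log max(|x|, s) ds`   (`convN_sliceg_eq`),

which depends on `|x|` only. The kernel `ρ ↦ log max(ρ, s)` is locally Lipschitz in `ρ > 0`,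
uniformly in `s`, and has derivative `1_{s < ρ} / ρ` for `s ≠ ρ`, so the integral may be
differentiated under the integral sign (`hasDerivAt_radial_potential`) even though `g` need not be
continuous. The radial derivative is thus `(2πρ)⁻¹ ∫₀^ρ s m(s) ds`, and `∫₀^ρ s m(s) ds` is the area
of `D ∩ B_ρ` (`area_eq_integral_angMeas`).
-/

open MeasureTheory Set Real Bornology

noncomputable section

open scoped ENNReal NNReal

/-! ### `ℋ¹` on circles -/

/-- Chords of a short arc are almost as long as the arc. -/
lemma mul_abs_le_dist_circleMap {r c a b : ℝ} (hr : 0 < r) (hc0 : 0 < c)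
    (hab : |a - b| ≤ 1 - c) :
    c * r * |a - b| ≤ dist (circleMap 0 r a) (circleMap 0 r b) := by
  have h1 : dist (circleMap 0 r a) (circleMap 0 r b) = r * |2 * Real.sin ((a - b) / 2)| := by
    have h2 : circleMap 0 r a - circleMap 0 r b
        = r * Complex.exp (b * Complex.I) * (Complex.exp (Complex.I * ((a - b : ℝ) : ℂ)) - 1) := by
      have : Complex.exp (a * Complex.I)
          = Complex.exp (b * Complex.I) * Complex.exp (Complex.I * ((a - b : ℝ) : ℂ)) := by
        rw [← Complex.exp_add]; congr 1; push_cast; ring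
      simp only [circleMap_zero, this]; ring
    rw [dist_eq_norm, h2, norm_mul, norm_mul, Complex.norm_exp_ofReal_mul_I,
      Complex.norm_exp_I_mul_ofReal_sub_one]
    simp [abs_of_pos hr]
  rw [h1]
  have key : ∀ t : ℝ, 0 ≤ t → t ≤ 1 - c → c * t ≤ 2 * Real.sin (t / 2) := by
    intro t ht0 ht
    rcases ht0.eq_or_lt with h | h
    · subst h; simp
    have := Real.sin_gt_sub_cube (x := t / 2) (by linarith)
    nlinarith [mul_nonneg ht0 (sub_nonneg.2 ht), pow_pos h 3,
      mul_nonneg (mul_nonneg ht0 ht0) (show 0 ≤ 1 - t by linarith)]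
  have h3 : |2 * Real.sin ((a - b) / 2)| ≥ c * |a - b| := by
    rcases le_total 0 (a - b) with h | h
    · rw [abs_of_nonneg h] at *
      exact (key _ h hab).trans (le_abs_self _)
    · rw [abs_of_nonpos h] at *
      refine (key _ (by linarith) hab).trans ?_
      rw [neg_div, Real.sin_neg, mul_neg]
      exact neg_le_abs _
  nlinarith

/-- On an arc of angle at most `1 - c`, the inverse of the parametrization by angle is
`(c * r)⁻¹`-Lipschitz, which bounds `ℋ¹` of the image from below. -/
lemma le_hausdorff_image_of_short {r c x y : ℝ} (hr : 0 < r) (hc0 : 0 < c)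
    (hxy : y - x ≤ 1 - c) (A : Set ℝ) (hA : A ⊆ Ioc x y) :
    ENNReal.ofReal (c * r) * volume A ≤ μH[1] (circleMap 0 r '' A) := by
  have hcr : 0 < c * r := mul_pos hc0 hr
  have hd : ∀ a ∈ A, ∀ b ∈ A,
      c * r * dist a b ≤ dist (circleMap 0 r a) (circleMap 0 r b) := by
    intro a ha b hb
    refine mul_abs_le_dist_circleMap hr hc0 ?_
    have := hA ha; have := hA hb
    simp only [mem_Ioc] at *
    rw [abs_le]; constructor <;> linarith
  have hinj : InjOn (circleMap 0 r) A := by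
    intro a ha b hb h
    have := hd a ha b hb
    rw [h, dist_self] at this
    exact dist_le_zero.1 (by nlinarith [dist_nonneg (x := a) (y := b)])
  have hlip : LipschitzOnWith (Real.toNNReal (c * r)⁻¹)
      (Function.invFunOn (circleMap 0 r) A) (circleMap 0 r '' A) := by
    apply LipschitzOnWith.of_dist_le_mul
    rintro _ ⟨a, ha, rfl⟩ _ ⟨b, hb, rfl⟩
    rw [hinj.leftInvOn_invFunOn ha, hinj.leftInvOn_invFunOn hb,
      Real.coe_toNNReal _ (by positivity), inv_mul_eq_div, le_div_iff₀ hcr, mul_comm]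
    exact hd a ha b hb
  have h := hlip.hausdorffMeasure_image_le (d := 1) zero_le_one
  rw [hinj.leftInvOn_invFunOn.image_image, hausdorffMeasure_real, ENNReal.rpow_one] at h
  calc ENNReal.ofReal (c * r) * volume A
      ≤ ENNReal.ofReal (c * r) * (ENNReal.ofReal (c * r)⁻¹ * μH[1] (circleMap 0 r '' A)) := by
        gcongr; exact h
    _ = μH[1] (circleMap 0 r '' A) := by
        rw [← mul_assoc, ← ENNReal.ofReal_mul hcr.le, mul_inv_cancel₀ hcr.ne']; simp

lemma le_hausdorff_image {r c : ℝ} (hr : 0 < r) (hc0 : 0 < c) (hc1 : c < 1)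
    {A : Set ℝ} (hA : A ⊆ Ioc (-π) π) (hAm : MeasurableSet A) :
    ENNReal.ofReal (c * r) * volume A ≤ μH[1] (circleMap 0 r '' A) := by
  have hp : 0 < 1 - c := by linarith
  have hinj : InjOn (circleMap 0 r) A := by
    refine InjOn.mono hA ?_
    have := injOn_circleMap_of_abs_sub_le (a := -π) (b := π) (c := 0) hr.ne'
      (by rw [abs_le]; constructor <;> linarith [Real.pi_pos])
    rwa [uIoc_of_le (by linarith [Real.pi_pos])] at this
  -- cut `A` into pieces of length `1 - c`
  let P : ℤ → Set ℝ := fun n => A ∩ Ioc (n • (1 - c)) ((n + 1) • (1 - c))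
  have hPm : ∀ n, MeasurableSet (P n) := fun n => hAm.inter measurableSet_Ioc
  have hPd : Pairwise (Function.onFun Disjoint P) := fun i j hij =>
    (pairwise_disjoint_Ioc_zsmul (1 - c) hij).mono inter_subset_right inter_subset_right
  have hPU : A = ⋃ n, P n := by
    rw [← inter_iUnion, iUnion_Ioc_zsmul hp, inter_univ]
  have hfm : ∀ n, MeasurableSet (circleMap 0 r '' P n) := fun n =>
    (hPm n).image_of_continuousOn_injOn (continuous_circleMap 0 r).continuousOn
      (hinj.mono inter_subset_left)
  have hfd : Pairwise (Function.onFun Disjoint fun n => circleMap 0 r '' P n) := fun i j hij =>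
    (hPd hij).image hinj inter_subset_left inter_subset_left
  calc ENNReal.ofReal (c * r) * volume A = ∑' n, ENNReal.ofReal (c * r) * volume (P n) := by
        conv_lhs => rw [hPU]
        rw [measure_iUnion hPd hPm, ENNReal.tsum_mul_left]
    _ ≤ ∑' n, μH[1] (circleMap 0 r '' P n) := by
        refine ENNReal.tsum_le_tsum fun n => ?_
        refine le_hausdorff_image_of_short hr hc0 ?_ _ inter_subset_right
        simp only [zsmul_eq_mul]; push_cast; linarith
    _ = μH[1] (circleMap 0 r '' A) := by
        rw [← measure_iUnion hfd hfm, ← image_iUnion, ← hPU]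

/-- `ℋ¹` on a circle is the arc-length measure: the upper bound is the Lipschitz constant `r` of
the parametrization, the lower bound is `le_hausdorff_image` as `c → 1`. -/
lemma hausdorff_circleMap_image {r : ℝ} (hr : 0 < r)
    {A : Set ℝ} (hA : A ⊆ Ioc (-π) π) (hAm : MeasurableSet A) :
    μH[1] (circleMap 0 r '' A) = ENNReal.ofReal r * volume A := by
  apply le_antisymm
  · have h := ((lipschitzWith_circleMap 0 r).lipschitzOnWith (s := A)).hausdorffMeasure_image_le
      (d := 1) zero_le_one
    rw [hausdorffMeasure_real, ENNReal.rpow_one] at h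
    have e : ((Real.nnabs r : ℝ≥0) : ℝ≥0∞) = ENNReal.ofReal r := by
      rw [ENNReal.ofReal, Real.nnabs_of_nonneg hr.le]
    rwa [e] at h
  · have hfin : volume A ≠ ∞ :=
      ne_top_of_le_ne_top (by simp) (measure_mono hA)
    have hev : ∀ᶠ c in nhdsWithin (1 : ℝ) (Iio 1),
        ENNReal.ofReal (c * r) * volume A ≤ μH[1] (circleMap 0 r '' A) := by
      filter_upwards [Ioo_mem_nhdsLT (show (0 : ℝ) < 1 by norm_num)] with c hc
      exact le_hausdorff_image hr hc.1 hc.2 hA hAm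
    refine le_of_tendsto ?_ hev
    refine ENNReal.Tendsto.mul_const ?_ (Or.inr hfin)
    refine (ENNReal.continuous_ofReal.tendsto _).comp ?_
    have : Filter.Tendsto (fun c : ℝ => c * r) (nhds 1) (nhds (1 * r)) :=
      (continuous_id.mul continuous_const).tendsto 1
    rw [one_mul] at this
    exact this.mono_left nhdsWithin_le_nhds

/-- The angular measure of the part of `E` on the circle of radius `s`. Angles range over the open
interval `(-π, π)`, as in `Complex.polarCoord`. -/
def angMeas (E : Set ℂ) (s : ℝ) : ℝ := volume.real (Ioo (-π) π ∩ circleMap 0 s ⁻¹' E)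

lemma hausdorff_sphere_inter {r : ℝ} (hr : 0 < r) {E : Set ℂ} (hE : MeasurableSet E) :
    (μH[1] (Metric.sphere (0 : ℂ) r ∩ E)).toReal = r * angMeas E r := by
  have h1 : Metric.sphere (0 : ℂ) r ∩ E
      = circleMap 0 r '' (Ioc (-π) π ∩ circleMap 0 r ⁻¹' E) := by
    ext z
    constructor
    · rintro ⟨hz, hzE⟩
      have hz' : ‖z‖ = r := by simpa using hz
      have : circleMap 0 r z.arg = z := by
        rw [circleMap_zero, ← hz', Complex.norm_mul_exp_arg_mul_I]
      exact ⟨z.arg, ⟨Complex.arg_mem_Ioc z, by simpa [this] using hzE⟩, this⟩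
    · rintro ⟨θ, ⟨-, hθ⟩, rfl⟩
      exact ⟨circleMap_mem_sphere 0 hr.le θ, hθ⟩
  have hm : MeasurableSet (circleMap 0 r ⁻¹' E) := (continuous_circleMap 0 r).measurable hE
  rw [h1, hausdorff_circleMap_image hr inter_subset_left (measurableSet_Ioc.inter hm),
    ENNReal.toReal_mul, ENNReal.toReal_ofReal hr.le, angMeas, measureReal_def]
  congr 2
  exact measure_congr (Ioo_ae_eq_Ioc.symm.inter (Filter.EventuallyEq.refl _ _))

/-! ### Polar coordinates and circle averages of the logarithm -/

lemma polarCoord_symm_eq_circleMap (p : ℝ × ℝ) :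
    Complex.polarCoord.symm p = circleMap 0 p.1 p.2 := by
  rw [Complex.polarCoord_symm_apply, circleMap_zero, Complex.exp_mul_I, Complex.ofReal_cos,
    Complex.ofReal_sin]

lemma measurable_circleMap_prod : Measurable fun p : ℝ × ℝ => circleMap 0 p.1 p.2 := by
  have : Continuous fun p : ℝ × ℝ => circleMap 0 p.1 p.2 := by
    unfold circleMap; fun_prop
  exact this.measurable

lemma measurable_angMeas {E : Set ℂ} (hE : MeasurableSet E) : Measurable (angMeas E) := by
  have hm : MeasurableSet ({p : ℝ × ℝ | p.2 ∈ Ioo (-π) π ∧ circleMap 0 p.1 p.2 ∈ E}) :=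
    (measurable_snd measurableSet_Ioo).inter (measurable_circleMap_prod hE)
  exact (measurable_measure_prodMk_left (ν := (volume : Measure ℝ)) hm).ennreal_toReal

lemma angMeas_nonneg (E : Set ℂ) (s : ℝ) : 0 ≤ angMeas E s := measureReal_nonneg

lemma angMeas_le (E : Set ℂ) (s : ℝ) : angMeas E s ≤ 2 * π := by
  have : angMeas E s ≤ volume.real (Ioo (-π) π) :=
    measureReal_mono inter_subset_left (by simp)
  refine this.trans (le_of_eq ?_)
  rw [Real.volume_real_Ioo_of_le (by linarith [Real.pi_pos])]; ring

lemma angMeas_eq_zero {E : Set ℂ} {R s : ℝ} (hE : E ⊆ Metric.ball 0 R) (hs : R ≤ s) :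
    angMeas E s = 0 := by
  have : Ioo (-π) π ∩ circleMap 0 s ⁻¹' E = ∅ := by
    rw [eq_empty_iff_forall_notMem]
    rintro θ ⟨-, hθ⟩
    have := hE hθ
    rw [mem_ball_zero_iff, norm_circleMap_zero] at this
    linarith [le_abs_self s]
  simp [angMeas, this]

/-- The area of `E ∩ B_ρ` in polar coordinates. -/
lemma area_eq_integral_angMeas {E : Set ℂ} (hE : MeasurableSet E) (ρ : ℝ) :
    volume.real (E ∩ Metric.ball 0 ρ)
      = ∫ s in Ioi (0 : ℝ), if s < ρ then s * angMeas E s else 0 := by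
  have hS : MeasurableSet (E ∩ Metric.ball 0 ρ) := hE.inter measurableSet_ball
  rw [integral_eq_lintegral_of_nonneg_ae, measureReal_def]
  · congr 1
    rw [← lintegral_indicator_one hS, ← Complex.lintegral_comp_polarCoord_symm, polarCoord_target,
      Measure.volume_eq_prod, ← Measure.prod_restrict, lintegral_prod]
    · refine setLIntegral_congr_fun measurableSet_Ioi fun s hs => ?_
      simp only [mem_Ioi] at hs
      have hcm : MeasurableSet (circleMap 0 s ⁻¹' E) := (continuous_circleMap 0 s).measurable hE
      have hi : ∀ θ, (E ∩ Metric.ball (0 : ℂ) ρ).indicator (1 : ℂ → ℝ≥0∞) (circleMap 0 s θ)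
          = if s < ρ then (circleMap 0 s ⁻¹' E).indicator (1 : ℝ → ℝ≥0∞) θ else 0 := by
        intro θ
        by_cases h : s < ρ <;> by_cases h' : circleMap 0 s θ ∈ E <;>
          simp [indicator, h, h', abs_of_pos hs]
      simp only [polarCoord_symm_eq_circleMap, smul_eq_mul, hi]
      split_ifs with h
      · have hfin : volume (Ioo (-π) π ∩ circleMap 0 s ⁻¹' E) ≠ ∞ :=
          ne_top_of_le_ne_top (by simp) (measure_mono inter_subset_left)
        rw [lintegral_const_mul _ (measurable_one.indicator hcm), lintegral_indicator_one hcm,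
          Measure.restrict_apply hcm, ENNReal.ofReal_mul hs.le, angMeas, ofReal_measureReal hfin,
          inter_comm]
      · simp
    · simp only [polarCoord_symm_eq_circleMap, smul_eq_mul]
      exact ((measurable_fst.ennreal_ofReal).mul
        ((measurable_one.indicator hS).comp measurable_circleMap_prod)).aemeasurable
  · refine (ae_restrict_iff' measurableSet_Ioi).2 (.of_forall fun s hs => ?_)
    simp only [mem_Ioi, Pi.zero_apply] at *
    split_ifs
    · exact mul_nonneg hs.le (angMeas_nonneg _ _)
    · rfl
  · exact (Measurable.ite measurableSet_Iio (measurable_id.mul (measurable_angMeas hE))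
      measurable_const).aestronglyMeasurable

lemma integrableOn_log_circle (x : ℂ) (s : ℝ) :
    IntegrableOn (fun θ => Real.log ‖x - circleMap 0 s θ‖) (Ioo (-π) π) := by
  have h : CircleIntegrable (Real.log ‖· - x‖) 0 s := circleIntegrable_log_norm_sub_const s
  have hp : Function.Periodic (fun θ => Real.log ‖circleMap 0 s θ - x‖) (2 * π) := fun θ => by
    simp only [periodic_circleMap 0 s θ]
  have h2 : IntervalIntegrable (fun θ => Real.log ‖circleMap 0 s θ - x‖) volume (-π) π :=
    hp.intervalIntegrable₀ (by positivity) h _ _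
  rw [intervalIntegrable_iff_integrableOn_Ioo_of_le (by linarith [Real.pi_pos])] at h2
  simpa only [norm_sub_rev x] using h2

/-- The mean of `log |x - ·|` over the circle of radius `s` is `log max(|x|, s)`. -/
lemma integral_log_circle {x : ℂ} {s : ℝ} (hs : 0 < s) :
    ∫ θ in Ioo (-π) π, Real.log ‖x - circleMap 0 s θ‖ = 2 * π * Real.log (max ‖x‖ s) := by
  have h := circleAverage_log_norm_sub_const_eq_log_radius_add_posLog (a := x) (c := 0) hs.ne'
  have hp : Function.Periodic (fun θ => Real.log ‖circleMap 0 s θ - x‖) (2 * π) := fun θ => by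
    simp only [periodic_circleMap 0 s θ]
  have h3 := hp.intervalIntegral_add_eq (-π) 0
  rw [show -π + 2 * π = π by ring, zero_add] at h3
  rw [circleAverage_def, ← h3, zero_sub, norm_neg, Real.posLog_eq_log_max_one (by positivity),
    ← Real.log_mul hs.ne' (by positivity), mul_max_of_nonneg _ _ hs.le, mul_one,
    mul_inv_cancel_left₀ hs.ne', smul_eq_mul, inv_mul_eq_iff_eq_mul₀ (by positivity),
    intervalIntegral.integral_of_le (by linarith [Real.pi_pos]), integral_Ioc_eq_integral_Ioo] at h
  simp only [norm_sub_rev x, max_comm ‖x‖]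
  exact h

/-- A bound for the `L¹` norm of `log |x - ·|` on circles, from `|log u| ≤ 2 u - log u` and the
value of the mean of the logarithm. -/
lemma integral_abs_log_circle_le {x : ℂ} (hx : x ≠ 0) {s : ℝ} (hs : 0 < s) :
    ∫ θ in Ioo (-π) π, |Real.log ‖x - circleMap 0 s θ‖|
      ≤ 4 * π * (‖x‖ + s) + 2 * π * |Real.log ‖x‖| := by
  have hI := integrableOn_log_circle x s
  have hle : ∀ θ, |Real.log ‖x - circleMap 0 s θ‖|
      ≤ 2 * (‖x‖ + s) - Real.log ‖x - circleMap 0 s θ‖ := by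
    intro θ
    have h1 : ‖x - circleMap 0 s θ‖ ≤ ‖x‖ + s := by
      simpa [abs_of_pos hs] using norm_sub_le x (circleMap 0 s θ)
    have h2 := Real.log_le_self (norm_nonneg (x - circleMap 0 s θ))
    have h3 := norm_nonneg x
    rw [abs_le]; constructor <;> linarith
  have hc : IntegrableOn (fun _ : ℝ => 2 * (‖x‖ + s)) (Ioo (-π) π) :=
    integrableOn_const (by simp)
  have h4 := integral_mono (μ := volume.restrict (Ioo (-π) π)) hI.abs (hc.sub hI) hle
  have h5 : ∫ θ in Ioo (-π) π, (2 * (‖x‖ + s) - Real.log ‖x - circleMap 0 s θ‖)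
      = 4 * π * (‖x‖ + s) - 2 * π * Real.log (max ‖x‖ s) := by
    rw [integral_sub hc hI, integral_log_circle hs, setIntegral_const,
      Real.volume_real_Ioo_of_le (by linarith [Real.pi_pos]), smul_eq_mul]
    ring
  have h6 : Real.log ‖x‖ ≤ Real.log (max ‖x‖ s) :=
    Real.log_le_log (norm_pos_iff.2 hx) (le_max_left _ _)
  refine h4.trans ?_
  simp only [Pi.sub_apply]
  rw [h5]
  have h7 := neg_abs_le (Real.log ‖x‖)
  nlinarith [Real.pi_pos]

/-- Integrating the angle out of the potential in polar coordinates: Fubini's theorem and the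
circle mean of the logarithm. -/
lemma integral_polar_potential {E : Set ℂ} (hE : MeasurableSet E) {R : ℝ}
    (hER : E ⊆ Metric.ball 0 R) {x : ℂ} (hx : x ≠ 0) :
    ∫ p in Ioi (0 : ℝ) ×ˢ Ioo (-π) π,
        p.1 * angMeas E p.1 * Real.log ‖x - circleMap 0 p.1 p.2‖
      = ∫ s in Ioi (0 : ℝ), 2 * π * (s * angMeas E s * Real.log (max ‖x‖ s)) := by
  set f : ℝ × ℝ → ℝ := fun p => p.1 * angMeas E p.1 * Real.log ‖x - circleMap 0 p.1 p.2‖ with hf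
  have hfm : Measurable f :=
    (measurable_fst.mul ((measurable_angMeas hE).comp measurable_fst)).mul
      (Real.measurable_log.comp (measurable_const.sub measurable_circleMap_prod).norm)
  set μ := volume.restrict (Ioi (0 : ℝ))
  set ν := volume.restrict (Ioo (-π) π)
  have hint : Integrable f (μ.prod ν) := by
    rw [integrable_prod_iff hfm.aestronglyMeasurable]
    refine ⟨.of_forall fun s => (integrableOn_log_circle x s).const_mul (s * angMeas E s), ?_⟩
    set C := R * (2 * π) * (4 * π * (‖x‖ + R) + 2 * π * |Real.log ‖x‖|)
    have hdom : Integrable ((Ioo 0 R).indicator fun _ => C) μ :=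
      (IntegrableOn.integrable_indicator (integrableOn_const (by simp))
        measurableSet_Ioo).mono_measure Measure.restrict_le_self
    refine hdom.mono' hfm.aestronglyMeasurable.norm.integral_prod_right' ?_
    refine (ae_restrict_iff' measurableSet_Ioi).2 (.of_forall fun s hs => ?_)
    simp only [mem_Ioi] at hs
    rw [Real.norm_of_nonneg (integral_nonneg fun _ => norm_nonneg _)]
    rcases lt_or_ge s R with h | h
    · have hn : ∀ θ, ‖f (s, θ)‖ = s * angMeas E s * |Real.log ‖x - circleMap 0 s θ‖| := by
        intro θ
        rw [hf, norm_mul, Real.norm_of_nonneg (mul_nonneg hs.le (angMeas_nonneg E s)),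
          Real.norm_eq_abs]
      simp only [hn]
      rw [integral_const_mul, indicator_of_mem (show s ∈ Ioo 0 R from ⟨hs, h⟩)]
      have h1 := integral_abs_log_circle_le hx hs
      have h2 : s * angMeas E s ≤ R * (2 * π) :=
        mul_le_mul h.le (angMeas_le E s) (angMeas_nonneg E s) (hs.le.trans h.le)
      refine mul_le_mul h2 (h1.trans ?_) (integral_nonneg fun _ => abs_nonneg _)
        ((mul_nonneg hs.le (angMeas_nonneg E s)).trans h2)
      gcongr
    · have hn : ∀ θ, ‖f (s, θ)‖ = 0 := by
        intro θ; simp [hf, angMeas_eq_zero hER h]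
      simp [hn, h]
  rw [Measure.volume_eq_prod, ← Measure.prod_restrict, integral_prod f hint]
  refine setIntegral_congr_fun measurableSet_Ioi fun s hs => ?_
  simp only [mem_Ioi] at hs
  simp only [hf]
  rw [integral_const_mul, integral_log_circle hs]
  ring

/-! ### Differentiating the radial potential -/

lemma abs_log_max_sub_le {δ a b s : ℝ} (hδ : 0 < δ) (ha : δ ≤ a) (hb : δ ≤ b) :
    |Real.log (max a s) - Real.log (max b s)| ≤ δ⁻¹ * |a - b| := by
  have key : ∀ u v : ℝ, δ ≤ u → δ ≤ v → Real.log u - Real.log v ≤ δ⁻¹ * |u - v| := by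
    intro u v hu hv
    have hu0 := hδ.trans_le hu
    have hv0 := hδ.trans_le hv
    rw [← Real.log_div hu0.ne' hv0.ne']
    calc Real.log (u / v) ≤ u / v - 1 := Real.log_le_sub_one_of_pos (by positivity)
      _ = v⁻¹ * (u - v) := by field_simp
      _ ≤ v⁻¹ * |u - v| := by gcongr; exact le_abs_self _
      _ ≤ δ⁻¹ * |u - v| := by gcongr
  have h1 : |max a s - max b s| ≤ |a - b| := by
    simpa using abs_max_sub_max_le_max a s b s
  have ha' := ha.trans (le_max_left a s)
  have hb' := hb.trans (le_max_left b s)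
  have h2 : δ⁻¹ * |max a s - max b s| ≤ δ⁻¹ * |a - b| := by gcongr
  rw [abs_le]
  constructor
  · have := key _ _ hb' ha'
    rw [abs_sub_comm] at this
    linarith
  · linarith [key _ _ ha' hb']

lemma hasDerivAt_log_max {ρ s : ℝ} (hρ : 0 < ρ) (hs : s ≠ ρ) :
    HasDerivAt (fun t => Real.log (max t s)) (if s < ρ then ρ⁻¹ else 0) ρ := by
  rcases lt_or_gt_of_ne hs with h | h
  · rw [if_pos h]
    refine (Real.hasDerivAt_log hρ.ne').congr_of_eventuallyEq ?_
    filter_upwards [lt_mem_nhds h] with t ht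
    rw [max_eq_left ht.le]
  · rw [if_neg h.not_gt]
    refine (hasDerivAt_const ρ (Real.log s)).congr_of_eventuallyEq ?_
    filter_upwards [gt_mem_nhds h] with t ht
    rw [max_eq_right ht.le]

/-- Differentiation under the integral sign; the kernel `ρ ↦ log max(ρ, s)` is locally Lipschitz
uniformly in `s`, and differentiable at `ρ` for all `s ≠ ρ`. -/
lemma hasDerivAt_radial_potential {E : Set ℂ} (hE : MeasurableSet E) {R : ℝ}
    (hER : E ⊆ Metric.ball 0 R) {ρ : ℝ} (hρ : 0 < ρ) :
    HasDerivAt (fun t => ∫ s in Ioi (0 : ℝ), s * angMeas E s * Real.log (max t s))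
      (volume.real (E ∩ Metric.ball 0 ρ) / ρ) ρ := by
  set w : ℝ → ℝ := fun s => s * angMeas E s with hw
  have hwm : Measurable w := measurable_id.mul (measurable_angMeas hE)
  have hw0 : ∀ s, R ≤ s → w s = 0 := fun s hs => by simp [hw, angMeas_eq_zero hER hs]
  have hwb : ∀ s, 0 < s → |w s| ≤ (Ioo 0 R).indicator (fun _ => R * (2 * π)) s := by
    intro s hs
    rcases lt_or_ge s R with h | h
    · rw [indicator_of_mem (show s ∈ Ioo 0 R from ⟨hs, h⟩), hw,
        abs_of_nonneg (mul_nonneg hs.le (angMeas_nonneg E s))]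
      exact mul_le_mul h.le (angMeas_le E s) (angMeas_nonneg E s) (hs.le.trans h.le)
    · simp [hw0 s h, h]
  have hlm : ∀ t : ℝ, Measurable fun s : ℝ => Real.log (max t s) := fun t =>
    Real.measurable_log.comp (measurable_const.max measurable_id)
  have hdom : ∀ C : ℝ, Integrable ((Ioo 0 R).indicator fun _ => C)
      (volume.restrict (Ioi (0 : ℝ))) := fun C =>
    (IntegrableOn.integrable_indicator (integrableOn_const (by simp))
      measurableSet_Ioo).mono_measure Measure.restrict_le_self
  have hwi : Integrable w (volume.restrict (Ioi (0 : ℝ))) :=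
    (hdom (R * (2 * π))).mono' hwm.aestronglyMeasurable
      ((ae_restrict_iff' measurableSet_Ioi).2 (.of_forall fun s hs => hwb s hs))
  have hmain := hasDerivAt_integral_of_dominated_loc_of_lip
    (μ := volume.restrict (Ioi (0 : ℝ))) (F := fun t s => w s * Real.log (max t s))
    (F' := fun s => w s * (if s < ρ then ρ⁻¹ else 0)) (x₀ := ρ) (s := Metric.ball ρ (ρ / 2))
    (bound := fun s => w s * (ρ / 2)⁻¹)
    (Metric.ball_mem_nhds ρ (by positivity))
    (.of_forall fun t => (hwm.mul (hlm t)).aestronglyMeasurable) ?_ ?_ ?_ ?_ ?_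
  · have hval : volume.real (E ∩ Metric.ball 0 ρ) / ρ
        = ∫ s in Ioi (0 : ℝ), w s * (if s < ρ then ρ⁻¹ else 0) := by
      rw [area_eq_integral_angMeas hE, ← integral_div]
      refine integral_congr_ae (.of_forall fun s => ?_)
      simp only [hw]
      split_ifs <;> simp [div_eq_mul_inv]
    rw [hval]
    exact hmain.2
  · -- on the support of `w` one has `ρ ≤ max ρ s ≤ max ρ R`
    refine (hdom (R * (2 * π) * (|Real.log ρ| + |Real.log (max ρ R)|))).mono'
      (hwm.mul (hlm ρ)).aestronglyMeasurable
      ((ae_restrict_iff' measurableSet_Ioi).2 (.of_forall fun s hs => ?_))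
    rcases lt_or_ge s R with h | h
    · have h1 := hwb s hs
      rw [indicator_of_mem (show s ∈ Ioo 0 R from ⟨hs, h⟩)] at h1 ⊢
      rw [norm_mul, Real.norm_eq_abs, Real.norm_eq_abs]
      have h2 : Real.log ρ ≤ Real.log (max ρ s) := Real.log_le_log hρ (le_max_left _ _)
      have h3 : Real.log (max ρ s) ≤ Real.log (max ρ R) :=
        Real.log_le_log (lt_max_of_lt_left hρ) (max_le_max le_rfl h.le)
      refine mul_le_mul h1 ?_ (abs_nonneg _) ((abs_nonneg _).trans h1)
      have h4 := neg_abs_le (Real.log ρ)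
      have h5 := le_abs_self (Real.log (max ρ R))
      have h6 := abs_nonneg (Real.log ρ)
      have h7 := abs_nonneg (Real.log (max ρ R))
      rw [abs_le]; constructor <;> linarith
    · simp [hw0 s h, h]
  · exact (hwm.mul (Measurable.ite measurableSet_Iio measurable_const
      measurable_const)).aestronglyMeasurable
  · refine .of_forall fun s => LipschitzOnWith.of_dist_le_mul fun a ha b hb => ?_
    rw [Metric.mem_ball, Real.dist_eq, abs_lt] at ha hb
    have := abs_log_max_sub_le (s := s) (half_pos hρ)
      (show ρ / 2 ≤ a by linarith) (show ρ / 2 ≤ b by linarith)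
    rw [Real.dist_eq, Real.dist_eq, ← mul_sub, abs_mul (w s), Real.coe_nnabs, abs_mul (w s),
      abs_of_pos (show 0 < (ρ / 2)⁻¹ by positivity), mul_assoc]
    gcongr
  · exact hwi.mul_const _
  · have : ∀ᵐ s ∂(volume.restrict (Ioi (0 : ℝ))), s ≠ ρ :=
      ae_restrict_of_ae (Measure.ae_ne volume ρ)
    filter_upwards [this] with s hs
    exact (hasDerivAt_log_max hρ hs).const_mul (w s)

/-! ### Transfer to `ℝ²` -/

/-- The isometry `ℂ ≃ ℝ²`, `z ↦ (re z, im z)`. -/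
def toPlane : ℂ ≃ₗᵢ[ℝ] R2 := Complex.orthonormalBasisOneI.repr

lemma measurePreserving_toPlane : MeasurePreserving toPlane :=
  Complex.orthonormalBasisOneI.measurePreserving_repr

/-- Off the origin, `g` is the angular measure of the slice divided by `2π`; at `0` it takes
the value `0` by the convention for division. -/
lemma sliceg_toPlane {D : Set R2} (hD : IsOpen D) {z : ℂ} (hz : z ≠ 0) :
    sliceg D (toPlane z) = angMeas (toPlane ⁻¹' D) ‖z‖ / (2 * π) := by
  have hz' : 0 < ‖z‖ := norm_pos_iff.2 hz
  have hE : MeasurableSet (toPlane ⁻¹' D) := (hD.preimage toPlane.continuous).measurableSet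
  have h1 : Metric.sphere (0 : ℂ) ‖z‖ ∩ toPlane ⁻¹' D
      = toPlane ⁻¹' (Metric.sphere (0 : R2) ‖z‖ ∩ D) := by
    ext y; simp
  have h2 := hausdorff_sphere_inter hz' hE
  rw [h1, toPlane.isometry.hausdorffMeasure_preimage (Or.inl zero_le_one),
    toPlane.surjective.range_eq, inter_univ] at h2
  rw [sliceg, LinearIsometryEquiv.norm_map, h2]
  field_simp

/-- The convolution `g * N` away from the origin, as an integral over the radius. -/
lemma convN_sliceg_eq {D : Set R2} (hD : IsOpen D) {R : ℝ}
    (hER : toPlane ⁻¹' D ⊆ Metric.ball 0 R) {x : R2} (hx : x ≠ 0) :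
    convN (sliceg D) x = (2 * π)⁻¹ *
      ∫ s in Ioi (0 : ℝ), s * angMeas (toPlane ⁻¹' D) s * Real.log (max ‖x‖ s) := by
  have hE : MeasurableSet (toPlane ⁻¹' D) := (hD.preimage toPlane.continuous).measurableSet
  obtain ⟨x, rfl⟩ := toPlane.surjective x
  have hx' : x ≠ 0 := by rintro rfl; simp at hx
  rw [convN, ← measurePreserving_toPlane.integral_comp
    toPlane.toHomeomorph.measurableEmbedding, ← Complex.integral_comp_polarCoord_symm,
    polarCoord_target, LinearIsometryEquiv.norm_map]
  have h := integral_polar_potential hE hER hx'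
  rw [integral_const_mul] at h
  have h2 : ∀ p ∈ Ioi (0 : ℝ) ×ˢ Ioo (-π) π,
      p.1 • (sliceg D (toPlane (Complex.polarCoord.symm p))
        * nker (toPlane x - toPlane (Complex.polarCoord.symm p)))
      = ((2 * π)⁻¹ * (2 * π)⁻¹) * (p.1 * angMeas (toPlane ⁻¹' D) p.1
          * Real.log ‖x - circleMap 0 p.1 p.2‖) := by
    rintro ⟨s, θ⟩ ⟨hs, -⟩
    simp only [mem_Ioi] at hs
    rw [polarCoord_symm_eq_circleMap, sliceg_toPlane hD (circleMap_ne_center hs.ne'),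
      ← map_sub, nker, LinearIsometryEquiv.norm_map, norm_circleMap_zero, abs_of_pos hs,
      smul_eq_mul]
    field_simp
  rw [setIntegral_congr_fun (measurableSet_Ioi.prod measurableSet_Ioo) h2, integral_const_mul, h]
  field_simp

lemma volume_toPlane_preimage (D : Set R2) (hD : IsOpen D) (ρ : ℝ) :
    volume.real (toPlane ⁻¹' D ∩ Metric.ball 0 ρ)
      = (volume (D ∩ Metric.ball (0 : R2) ρ)).toReal := by
  have h1 : toPlane ⁻¹' D ∩ Metric.ball 0 ρ = toPlane ⁻¹' (D ∩ Metric.ball (0 : R2) ρ) := by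
    ext y; simp
  rw [h1, measureReal_def, measurePreserving_toPlane.measure_preimage
    (hD.measurableSet.inter measurableSet_ball).nullMeasurableSet]

lemma hasFDerivAt_norm_of_ne_zero {x : R2} (hx : x ≠ 0) :
    HasFDerivAt (fun y : R2 => ‖y‖) (‖x‖⁻¹ • innerSL ℝ x) x := by
  have h1 := (hasStrictFDerivAt_norm_sq x).hasFDerivAt
  have hx' : 0 < ‖x‖ := norm_pos_iff.2 hx
  have h2 := h1.sqrt (by positivity)
  simp only [Real.sqrt_sq (norm_nonneg _)] at h2
  have h3 : ‖x‖⁻¹ • innerSL ℝ x = (1 / (2 * ‖x‖)) • 2 • innerSL ℝ x := by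
    rw [← Nat.cast_smul_eq_nsmul ℝ, smul_smul]
    congr 1
    push_cast
    field_simp
  rw [h3]
  exact h2

/-- The radial part `φ^r = g * N` of the stream function is radial, and
its gradient is `(|D ∩ B_{|x|}|/(2π|x|²)) x`; in particular its radial derivative at
radius `r` is `|D ∩ B_r|/(2πr)`. -/
theorem radial_stream_gradient (D : Set R2) (hD : IsOpen D) (hb : IsBounded D) :
    (∀ x y : R2, ‖x‖ = ‖y‖ → convN (sliceg D) x = convN (sliceg D) y) ∧
    ∀ x : R2, x ≠ 0 →
      gradient (convN (sliceg D)) x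
        = ((volume (D ∩ Metric.ball (0 : R2) ‖x‖)).toReal / (2 * π * ‖x‖ ^ 2)) • x := by
  have hbE : IsBounded (toPlane ⁻¹' D) := by
    have := toPlane.symm.lipschitz.isBounded_image hb
    rwa [toPlane.symm.image_eq_preimage_symm] at this
  obtain ⟨R, hR⟩ := hbE.subset_ball 0
  have hE : MeasurableSet (toPlane ⁻¹' D) := (hD.preimage toPlane.continuous).measurableSet
  constructor
  · intro x y hxy
    rcases eq_or_ne x 0 with rfl | hx
    · rw [norm_zero, eq_comm, norm_eq_zero] at hxy
      rw [hxy]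
    · have hy : y ≠ 0 := by
        rw [← norm_ne_zero_iff, ← hxy]; exact norm_ne_zero_iff.2 hx
      rw [convN_sliceg_eq hD hR hx, convN_sliceg_eq hD hR hy, hxy]
  · intro x hx
    have hx' : 0 < ‖x‖ := norm_pos_iff.2 hx
    have h1 := ((hasDerivAt_radial_potential hE hR hx').const_mul (2 * π)⁻¹).comp_hasFDerivAt x
      (hasFDerivAt_norm_of_ne_zero hx)
    have h2 : HasFDerivAt (convN (sliceg D)) _ x := h1.congr_of_eventuallyEq (by
      filter_upwards [isOpen_ne.mem_nhds hx] with y hy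
      exact convN_sliceg_eq hD hR hy)
    refine HasGradientAt.gradient ?_
    rw [hasGradientAt_iff_hasFDerivAt]
    refine h2.congr_fderiv ?_
    rw [volume_toPlane_preimage D hD]
    ext v
    simp
    field_simp
end
end
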